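/- arXiv:0908.0546 — 6 statements merged into one kernel-verified Lean document; each statement's English description precedes it below -/
import Mathlib

section
/- Let D ⊆ ℝ^d (d ≥ 2) be a bounded open set, δ(x) = dist(x, ∂D), and let f : D → ℝ be differentiable with f⁰ = f − (1/|D|)∫_D f. Let β, γ > 0 and ψ(p) = (p−1)^{−β}(d−p)^{−γ} for p ∈ (1,d). Suppose that for every p ∈ (1,d) the Poincaré inequality |f⁰/δ|_{p,D} ≤ C(D) · (p/(d−p)) · | |grad f| |_{p,D} holds, and suppose sup_{p∈(1,d)} | |grad f| |_{p,D}/ψ(p) < ∞. Then sup_{p∈(1,d)} |f⁰/δ|_{p,D} / ((p−1)^{−β}(d−p)^{−γ−1}) < ∞; i.e., f⁰/δ belongs to the Bilateral Grand Lebesgue Space G(1,d; β, γ+1). -/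
open MeasureTheory Set ENNReal

/-- The `L^p` norm of `f` over a set `E ⊆ ℝ^d` with respect to Lebesgue measure:
`|f|_{p,E} = (∫_E |f(x)|^p dx)^{1/p}`. -/
noncomputable def LpNormOn {d : ℕ} (p : ℝ) (E : Set (EuclideanSpace ℝ (Fin d)))
    (f : EuclideanSpace ℝ (Fin d) → ℝ) : ℝ≥0∞ :=
  (∫⁻ x in E, ENNReal.ofReal (|f x| ^ p)) ^ (1 / p)

/-- The weight `ψ(p) = (p − a)^{−β} (b − p)^{−γ}` defining the space `G(a,b;β,γ)`; it is meant for
`p ∈ (a,b)`, where both bases are positive. -/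
noncomputable def bglsWeight (a b β γ p : ℝ) : ℝ :=
  (p - a) ^ (-β) * (b - p) ^ (-γ)

/-- The norm of the Bilateral Grand Lebesgue Space `G(a,b;β,γ)` over `E`, with values in `[0,∞]`, so
that membership of a measurable `f` in the space reads `bglsNorm a b β γ E f < ⊤`. -/
noncomputable def bglsNorm {d : ℕ} (a b β γ : ℝ) (E : Set (EuclideanSpace ℝ (Fin d)))
    (f : EuclideanSpace ℝ (Fin d) → ℝ) : ℝ≥0∞ :=
  ⨆ p ∈ Ioo a b, LpNormOn p E f / ENNReal.ofReal (bglsWeight a b β γ p)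

theorem iSup₂_div_le_mul_iSup₂_div {ι : Type*} {s : Set ι} {u v c φ ψ : ι → ℝ≥0∞} {K : ℝ≥0∞}
    (hψ_ne_zero : ∀ p ∈ s, ψ p ≠ 0) (hψ_ne_top : ∀ p ∈ s, ψ p ≠ ⊤)
    (hu : ∀ p ∈ s, u p ≤ c p * v p) (hc : ∀ p ∈ s, c p * ψ p ≤ K * φ p) :
    ⨆ p ∈ s, u p / φ p ≤ K * ⨆ p ∈ s, v p / ψ p := by
  refine iSup₂_le fun p hp => ENNReal.div_le_of_le_mul ?_
  calc u p ≤ c p * v p := hu p hp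
    _ = c p * ψ p * (v p / ψ p) := by
      rw [mul_assoc, ENNReal.mul_div_cancel (hψ_ne_zero p hp) (hψ_ne_top p hp)]
    _ ≤ K * φ p * ⨆ q ∈ s, v q / ψ q :=
      mul_le_mul' (hc p hp) (le_iSup₂ (f := fun q (_ : q ∈ s) => v q / ψ q) p hp)
    _ = (K * ⨆ q ∈ s, v q / ψ q) * φ p := mul_right_comm _ _ _

section Weight

variable {a b p : ℝ}

theorem bglsWeight_pos (β γ : ℝ) (hp : p ∈ Ioo a b) : 0 < bglsWeight a b β γ p :=
  mul_pos (Real.rpow_pos_of_pos (sub_pos.2 hp.1) _) (Real.rpow_pos_of_pos (sub_pos.2 hp.2) _)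

theorem bglsWeight_add_one (a β γ : ℝ) (hp : p < b) :
    bglsWeight a b β (γ + 1) p = bglsWeight a b β γ p / (b - p) := by
  rw [bglsWeight, bglsWeight, neg_add', Real.rpow_sub_one (sub_pos.2 hp).ne', mul_div_assoc]

theorem mul_div_mul_bglsWeight_le {C : ℝ} (β γ : ℝ) (hC : 0 ≤ C) (hp : p ∈ Ioo a b) :
    C * (p / (b - p)) * bglsWeight a b β γ p ≤ C * b * bglsWeight a b β (γ + 1) p :=
  calc C * (p / (b - p)) * bglsWeight a b β γ p
      = C * p * bglsWeight a b β (γ + 1) p := by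
        rw [bglsWeight_add_one a β γ hp.2]
        ring
    _ ≤ C * b * bglsWeight a b β (γ + 1) p :=
      mul_le_mul_of_nonneg_right (mul_le_mul_of_nonneg_left hp.2.le hC)
        (bglsWeight_pos β (γ + 1) hp).le

end Weight

theorem bgls_poincare_bounded_general {d : ℕ} {a b C : ℝ} (β γ : ℝ)
    {E : Set (EuclideanSpace ℝ (Fin d))} {u g : EuclideanSpace ℝ (Fin d) → ℝ} (hC : 0 ≤ C)
    (hPoin : ∀ p ∈ Ioo a b,
      LpNormOn p E u ≤ ENNReal.ofReal (C * (p / (b - p))) * LpNormOn p E g) :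
    bglsNorm a b β (γ + 1) E u ≤ ENNReal.ofReal (C * b) * bglsNorm a b β γ E g := by
  refine iSup₂_div_le_mul_iSup₂_div
    (fun p hp => (ENNReal.ofReal_pos.2 (bglsWeight_pos β γ hp)).ne')
    (fun _ _ => ENNReal.ofReal_ne_top) hPoin fun p hp => ?_
  rw [← ENNReal.ofReal_mul' (bglsWeight_pos β γ hp).le,
    ← ENNReal.ofReal_mul' (bglsWeight_pos β (γ + 1) hp).le]
  exact ENNReal.ofReal_le_ofReal (mul_div_mul_bglsWeight_le β γ hC hp)

/-- Example 1 (bounded case): let `D ⊆ ℝ^d` (`d ≥ 2`) be a bounded open set,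
`δ(x) = dist(x, ∂D)`, `f` differentiable, `f⁰ = f − (1/|D|)∫_D f`, and `β, γ > 0`.
If the Poincaré inequality `|f⁰/δ|_p ≤ C·(p/(d−p))·| |grad f| |_p` holds for all
`p ∈ (1,d)` and `|grad f| ∈ G(1,d;β,γ)`, i.e.
`sup_{p∈(1,d)} | |grad f| |_p/((p−1)^{−β}(d−p)^{−γ}) < ∞`, then
`f⁰/δ ∈ G(1,d;β,γ+1)`, i.e.
`sup_{p∈(1,d)} |f⁰/δ|_p/((p−1)^{−β}(d−p)^{−γ−1}) < ∞`. -/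
theorem bgls_poincare_bounded (d : ℕ) (hd : 2 ≤ d)
    (D : Set (EuclideanSpace ℝ (Fin d))) (hDo : IsOpen D) (hDb : Bornology.IsBounded D)
    (f : EuclideanSpace ℝ (Fin d) → ℝ) (hf : Differentiable ℝ f)
    (β γ : ℝ) (hβ : 0 < β) (hγ : 0 < γ)
    (C : ℝ) (hC : 0 < C)
    (hPoin : ∀ p ∈ Ioo (1 : ℝ) (d : ℝ),
      LpNormOn p D (fun x =>
          (f x - (∫ y in D, f y) / (volume D).toReal) / Metric.infDist x (frontier D))
        ≤ ENNReal.ofReal (C * (p / ((d : ℝ) - p))) *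
            LpNormOn p D (fun x => ‖fderiv ℝ f x‖))
    (hG : (⨆ p ∈ Ioo (1 : ℝ) (d : ℝ),
        LpNormOn p D (fun x => ‖fderiv ℝ f x‖) /
          ENNReal.ofReal ((p - 1) ^ (-β) * ((d : ℝ) - p) ^ (-γ))) < ⊤) :
    (⨆ p ∈ Ioo (1 : ℝ) (d : ℝ),
        LpNormOn p D (fun x =>
            (f x - (∫ y in D, f y) / (volume D).toReal) / Metric.infDist x (frontier D)) /
          ENNReal.ofReal ((p - 1) ^ (-β) * ((d : ℝ) - p) ^ (-γ - 1))) < ⊤ := by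
  simpa only [bglsNorm, bglsWeight, neg_add'] using
    (bgls_poincare_bounded_general β γ hC.le hPoin).trans_lt
      (ENNReal.mul_lt_top ENNReal.ofReal_lt_top hG)
end

section
/- Let d ≥ 2, α > −1 with p₀ := d/(1+α) > 1, and Δ > 1. Define u(x) = (−log|x|)^Δ for x ∈ ℝ^d with 0 < |x| < 1/e. Then |grad u(x)| = Δ(−log|x|)^{Δ−1}/|x|, and there exist constants 0 < c₁ ≤ c₂ < ∞ (depending only on d, α, Δ) such that for all p ∈ (1, p₀): c₁ · (d − p(1+α))^{−(Δ−1) − 1/p} ≤ ( ∫_{|x|<1/e} ( |grad u(x)| · |x|^{−α} )^p dx )^{1/p} ≤ c₂ · (d − p(1+α))^{−(Δ−1) − 1/p}. -/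
open MeasureTheory Set ENNReal

/-!
In polar coordinates the `p`-th power of the weighted norm is a constant times
`∫₀^R r ^ (ε - 1) * (-log r) ^ ((Δ - 1) * p) dr` with `ε = d - p * (1 + α)`. Substituting
`r = exp (-v / ε)` turns this into `ε ^ (-s) * Γ(s, -ε * log R)` with `s = (Δ - 1) * p + 1`, so the
claimed power of `ε` comes out exactly after taking `p`-th roots. What is left is an incomplete
gamma function whose arguments stay in a compact set, so it is bounded above and away from zero.
-/

section

open Metric Module

section RpowBetweenOneAndSelf

variable {q : ℝ} (x : ℝ≥0∞)

lemma min_one_le_ennreal_rpow (hq₀ : 0 ≤ q) (hq₁ : q ≤ 1) : min 1 x ≤ x ^ q := by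
  rcases le_total x 1 with hx | hx
  · calc min 1 x ≤ x ^ (1 : ℝ) := by simp
      _ ≤ x ^ q := rpow_le_rpow_of_exponent_ge hx hq₁
  · calc min 1 x ≤ x ^ (0 : ℝ) := by simp
      _ ≤ x ^ q := rpow_le_rpow_of_exponent_le hx hq₀

lemma ennreal_rpow_le_max_one (hq₀ : 0 ≤ q) (hq₁ : q ≤ 1) : x ^ q ≤ max 1 x := by
  rcases le_total x 1 with hx | hx
  · exact (rpow_le_one hx hq₀).trans (le_max_left 1 x)
  · calc x ^ q ≤ x ^ (1 : ℝ) := rpow_le_rpow_of_exponent_le hx hq₁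
      _ ≤ max 1 x := by simp

end RpowBetweenOneAndSelf

section IncompleteGamma

/-- The upper incomplete gamma function `Γ(s, a) = ∫_a^∞ exp (-t) * t ^ (s - 1) dt`, which carries
all the dependence on the radius and the residual dependence on the exponent. It is a lower
integral, so that no convergence has to be assumed; it is meant for `0 ≤ a`. -/
noncomputable def upperIncompleteGamma (s a : ℝ) : ℝ≥0∞ :=
  ∫⁻ t in Ioi a, ENNReal.ofReal (Real.exp (-t) * t ^ (s - 1))

lemma upperIncompleteGamma_antitone (s : ℝ) : Antitone (upperIncompleteGamma s) :=
  fun _ _ hab ↦ lintegral_mono_set (Ioi_subset_Ioi hab)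

lemma upperIncompleteGamma_zero {s : ℝ} (hs : 0 < s) :
    upperIncompleteGamma s 0 = ENNReal.ofReal (Real.Gamma s) := by
  have integrand_nonneg :
      0 ≤ᵐ[volume.restrict (Ioi 0)] fun t : ℝ ↦ Real.exp (-t) * t ^ (s - 1) := by
    filter_upwards [ae_restrict_mem measurableSet_Ioi] with t ht
    exact mul_nonneg (Real.exp_pos _).le (Real.rpow_nonneg ht.out.le _)
  rw [upperIncompleteGamma, Real.Gamma_eq_integral hs,
    ofReal_integral_eq_lintegral_ofReal (Real.GammaIntegral_convergent hs) integrand_nonneg]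

lemma upperIncompleteGamma_le_max_Gamma {s S a : ℝ} (hs : 1 ≤ s) (hsS : s ≤ S) (ha : 0 ≤ a) :
    upperIncompleteGamma s a ≤ ENNReal.ofReal (max 1 (Real.Gamma S)) := by
  have hs₀ : 0 < s := by linarith
  calc upperIncompleteGamma s a ≤ upperIncompleteGamma s 0 := upperIncompleteGamma_antitone s ha
    _ = ENNReal.ofReal (Real.Gamma s) := upperIncompleteGamma_zero hs₀
    _ ≤ ENNReal.ofReal (max 1 (Real.Gamma S)) := by
      gcongr
      simpa only [Real.Gamma_one] using Real.convexOn_Gamma.le_max_of_mem_Icc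
        (mem_Ioi.2 one_pos) (mem_Ioi.2 (hs₀.trans_le hsS)) ⟨hs, hsS⟩

lemma exp_neg_le_upperIncompleteGamma {s a : ℝ} (hs : 1 ≤ s) (ha : 1 ≤ a) :
    ENNReal.ofReal (Real.exp (-a)) ≤ upperIncompleteGamma s a :=
  calc ENNReal.ofReal (Real.exp (-a))
      = ∫⁻ t in Ioi a, ENNReal.ofReal (Real.exp (-t)) := by
        rw [← integral_exp_neg_Ioi a, ofReal_integral_eq_lintegral_ofReal
          (integrableOn_exp_neg_Ioi a) (.of_forall fun t ↦ (Real.exp_pos (-t)).le)]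
    _ ≤ upperIncompleteGamma s a := by
        refine setLIntegral_mono' measurableSet_Ioi fun t ht ↦ ofReal_le_ofReal ?_
        exact le_mul_of_one_le_right (Real.exp_pos _).le
          (Real.one_le_rpow (ha.trans ht.out.le) (by linarith))

lemma exists_bounds_rpow_mul_upperIncompleteGamma {σ : ℝ≥0∞} (hσ₀ : σ ≠ 0) (hσ : σ ≠ ∞)
    (S A : ℝ) :
    ∃ b₁ b₂ : ℝ, 0 < b₁ ∧ b₁ ≤ b₂ ∧ ∀ q ∈ Icc (0 : ℝ) 1, ∀ s ∈ Icc 1 S, ∀ a ∈ Icc 0 A,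
      (σ * upperIncompleteGamma s a) ^ q ∈ Icc (ENNReal.ofReal b₁) (ENNReal.ofReal b₂) := by
  set lower : ℝ≥0∞ := min 1 (σ * ENNReal.ofReal (Real.exp (-max 1 A)))
  set upper : ℝ≥0∞ := max 1 (σ * ENNReal.ofReal (max 1 (Real.Gamma S)))
  have lower_ne_top : lower ≠ ∞ := ne_top_of_le_ne_top one_ne_top (min_le_left _ _)
  have lower_ne_zero : lower ≠ 0 := by
    have : 0 < lower := lt_min one_pos
      (ENNReal.mul_pos hσ₀ (ENNReal.ofReal_pos.2 (Real.exp_pos _)).ne')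
    exact this.ne'
  have upper_ne_top : upper ≠ ∞ := max_ne_top one_ne_top (mul_ne_top hσ ofReal_ne_top)
  refine ⟨lower.toReal, upper.toReal, toReal_pos lower_ne_zero lower_ne_top,
    toReal_mono upper_ne_top ((min_le_left _ _).trans (le_max_left _ _)), ?_⟩
  rintro q ⟨hq₀, hq₁⟩ s ⟨hs, hsS⟩ a ⟨ha, haA⟩
  rw [ofReal_toReal lower_ne_top, ofReal_toReal upper_ne_top]
  constructor
  · refine le_trans ?_ (min_one_le_ennreal_rpow _ hq₀ hq₁)
    refine min_le_min_left 1 (mul_le_mul_right ?_ σ)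
    exact (exp_neg_le_upperIncompleteGamma hs (le_max_left 1 A)).trans
      (upperIncompleteGamma_antitone s (haA.trans (le_max_right 1 A)))
  · refine (ennreal_rpow_le_max_one _ hq₀ hq₁).trans ?_
    exact max_le_max_left 1 (mul_le_mul_right (upperIncompleteGamma_le_max_Gamma hs hsS ha) σ)

end IncompleteGamma

section RadialIntegrals

lemma lintegral_Ioo_zero_eq_lintegral_exp_neg {R : ℝ} (hR : 0 < R) (f : ℝ → ℝ≥0∞) :
    ∫⁻ r in Ioo 0 R, f r
      = ∫⁻ t in Ioi (-Real.log R), ENNReal.ofReal (Real.exp (-t)) * f (Real.exp (-t)) := by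
  have image_eq : (fun t ↦ Real.exp (-t)) '' Ioi (-Real.log R) = Ioo 0 R := by
    ext r
    constructor
    · rintro ⟨t, ht, rfl⟩
      exact ⟨Real.exp_pos _, (Real.lt_log_iff_exp_lt hR).1 (neg_lt.1 ht)⟩
    · rintro ⟨hr, hrR⟩
      exact ⟨-Real.log r, neg_lt_neg (Real.log_lt_log hr hrR), by simp [Real.exp_log hr]⟩
  have injective : Function.Injective fun t : ℝ ↦ Real.exp (-t) :=
    Real.exp_injective.comp neg_injective
  have hasDerivWithinAt (t : ℝ) (_ : t ∈ Ioi (-Real.log R)) :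
      HasDerivWithinAt (fun t ↦ Real.exp (-t)) (-Real.exp (-t)) (Ioi (-Real.log R)) t := by
    simpa using (hasDerivAt_neg t).exp.hasDerivWithinAt
  rw [← image_eq, lintegral_image_eq_lintegral_abs_deriv_mul measurableSet_Ioi
    hasDerivWithinAt injective.injOn]
  simp only [abs_neg, Real.abs_exp]

lemma lintegral_Ioi_comp_mul_left {c : ℝ} (hc : 0 < c) (a : ℝ) (f : ℝ → ℝ≥0∞) :
    ∫⁻ v in Ioi (c * a), f v = ∫⁻ t in Ioi a, ENNReal.ofReal c * f (c * t) := by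
  have hasDerivWithinAt (t : ℝ) (_ : t ∈ Ioi a) : HasDerivWithinAt (c * ·) c (Ioi a) t := by
    simpa using ((hasDerivAt_id t).const_mul c).hasDerivWithinAt
  rw [← image_mul_left_Ioi hc, lintegral_image_eq_lintegral_abs_deriv_mul measurableSet_Ioi
    hasDerivWithinAt (mul_right_injective₀ hc.ne').injOn]
  simp only [abs_of_pos hc]

lemma lintegral_Ioi_exp_neg_mul_rpow {ε a : ℝ} (s : ℝ) (hε : 0 < ε) (ha : 0 ≤ a) :
    ∫⁻ t in Ioi a, ENNReal.ofReal (Real.exp (-(ε * t)) * t ^ (s - 1))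
      = ENNReal.ofReal (ε ^ (-s)) * upperIncompleteGamma s (ε * a) := by
  rw [upperIncompleteGamma, lintegral_Ioi_comp_mul_left hε, ← lintegral_const_mul _ (by fun_prop)]
  refine setLIntegral_congr_fun measurableSet_Ioi fun t ht ↦ ?_
  have ht₀ : 0 ≤ t := ha.trans ht.out.le
  have power_cancel : ε ^ (-s) * ε * ε ^ (s - 1) = 1 := by
    rw [← Real.rpow_add_one hε.ne', ← Real.rpow_add hε]
    simp
  rw [← ofReal_mul hε.le, ← ofReal_mul (by positivity), Real.mul_rpow hε.le ht₀]
  congr 1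
  linear_combination (-(Real.exp (-(ε * t)) * t ^ (s - 1))) * power_cancel

lemma lintegral_Ioo_rpow_mul_neg_log_rpow {ε R : ℝ} (s : ℝ) (hε : 0 < ε) (hR₀ : 0 < R)
    (hR₁ : R ≤ 1) :
    ∫⁻ r in Ioo 0 R, ENNReal.ofReal (r ^ (ε - 1) * (-Real.log r) ^ (s - 1))
      = ENNReal.ofReal (ε ^ (-s)) * upperIncompleteGamma s (ε * -Real.log R) := by
  rw [lintegral_Ioo_zero_eq_lintegral_exp_neg hR₀,
    ← lintegral_Ioi_exp_neg_mul_rpow s hε (neg_nonneg.2 (Real.log_nonpos hR₀.le hR₁))]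
  refine lintegral_congr fun t ↦ ?_
  rw [← ofReal_mul (Real.exp_pos _).le, Real.log_exp, neg_neg, ← Real.exp_mul, ← mul_assoc,
    ← Real.exp_add]
  ring_nf

lemma pow_mul_weighted_deriv_rpow {r α Δ : ℝ} (p : ℝ) (n : ℕ) (hΔ : 0 ≤ Δ) (hr₀ : 0 < r)
    (hr₁ : r ≤ 1) :
    r ^ n * (Δ * (-Real.log r) ^ (Δ - 1) / r * r ^ (-α)) ^ p
      = Δ ^ p * (r ^ (n - p * (1 + α)) * (-Real.log r) ^ ((Δ - 1) * p)) := by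
  have hlog : 0 ≤ -Real.log r := neg_nonneg.2 (Real.log_nonpos hr₀.le hr₁)
  have powers_of_r : Δ * (-Real.log r) ^ (Δ - 1) / r * r ^ (-α)
      = Δ * (-Real.log r) ^ (Δ - 1) * r ^ (-(1 + α)) := by
    rw [neg_add, Real.rpow_add hr₀, Real.rpow_neg_one]
    ring
  rw [powers_of_r, Real.mul_rpow (by positivity) (by positivity), Real.mul_rpow hΔ (by positivity),
    ← Real.rpow_mul hlog, ← Real.rpow_mul hr₀.le, sub_eq_add_neg (n : ℝ), Real.rpow_add hr₀,
    Real.rpow_natCast]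
  ring_nf

end RadialIntegrals

section RadialFunctions

variable {E : Type*} [NormedAddCommGroup E] [NormedSpace ℝ E] [Nontrivial E]

lemma norm_fderiv_comp_norm {g : ℝ → ℝ} {g' : ℝ} {x : E} (hx : DifferentiableAt ℝ (‖·‖) x)
    (hg : HasDerivAt g g' ‖x‖) : ‖fderiv ℝ (fun y : E ↦ g ‖y‖) x‖ = |g'| := by
  have chain_rule : fderiv ℝ (fun y : E ↦ g ‖y‖) x = g' • fderiv ℝ (‖·‖) x :=
    (hg.comp_hasFDerivAt x hx.hasFDerivAt).fderiv
  rw [chain_rule, norm_smul, norm_fderiv_norm hx, mul_one, Real.norm_eq_abs]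

lemma norm_fderiv_neg_log_norm_rpow {Δ : ℝ} {x : E} (hΔ : 0 ≤ Δ)
    (hx : DifferentiableAt ℝ (‖·‖) x) (hx₁ : ‖x‖ < 1) :
    ‖fderiv ℝ (fun y : E ↦ (-Real.log ‖y‖) ^ Δ) x‖ = Δ * (-Real.log ‖x‖) ^ (Δ - 1) / ‖x‖ := by
  have hx₀ : 0 < ‖x‖ := norm_pos_iff.2 fun h ↦ not_differentiableAt_norm_zero E (h ▸ hx)
  have hlog : 0 < -Real.log ‖x‖ := neg_pos.2 (Real.log_neg hx₀ hx₁)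
  have radial_deriv : HasDerivAt (fun r ↦ (-Real.log r) ^ Δ)
      (-‖x‖⁻¹ * Δ * (-Real.log ‖x‖) ^ (Δ - 1)) ‖x‖ :=
    (Real.hasDerivAt_log hx₀.ne').neg.rpow_const (.inl hlog.ne')
  rw [norm_fderiv_comp_norm hx radial_deriv, neg_mul, neg_mul, abs_neg,
    abs_of_nonneg (by positivity)]
  ring

variable [FiniteDimensional ℝ E] [MeasurableSpace E] [BorelSpace E]
  (μ : Measure E) [μ.IsAddHaarMeasure]

lemma lintegral_fun_norm_addHaar {f : ℝ → ℝ≥0∞} (hf : Measurable f) :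
    ∫⁻ x, f ‖x‖ ∂μ = finrank ℝ E * μ (ball 0 1) *
      ∫⁻ r in Ioi (0 : ℝ), ENNReal.ofReal (r ^ (finrank ℝ E - 1)) * f r := by
  have hf' : Measurable fun r : Ioi (0 : ℝ) ↦ f r := hf.comp measurable_subtype_coe
  calc ∫⁻ x, f ‖x‖ ∂μ
      = ∫⁻ x : ({0}ᶜ : Set E), f ‖x.1‖ ∂μ.comap (↑) := by
        rw [lintegral_subtype_comap (measurableSet_singleton _).compl fun x ↦ f ‖x‖,
          restrict_compl_singleton]
    _ = ∫⁻ z, f z.2 ∂μ.toSphere.prod (.volumeIoiPow (finrank ℝ E - 1)) := by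
        simpa using μ.measurePreserving_homeomorphUnitSphereProd.lintegral_comp_emb
          (Homeomorph.measurableEmbedding _) fun z ↦ f z.2
    _ = μ.toSphere univ * ∫⁻ r : Ioi (0 : ℝ), f r ∂.volumeIoiPow (finrank ℝ E - 1) := by
        rw [← lintegral_map hf' measurable_snd, Measure.map_snd_prod, lintegral_smul_measure,
          smul_eq_mul]
    _ = finrank ℝ E * μ (ball 0 1) *
          ∫⁻ r in Ioi (0 : ℝ), ENNReal.ofReal (r ^ (finrank ℝ E - 1)) * f r := by
        rw [μ.toSphere_apply_univ, Measure.volumeIoiPow,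
          lintegral_withDensity_eq_lintegral_mul _ (by fun_prop) hf',
          ← lintegral_subtype_comap measurableSet_Ioi]
        rfl

lemma lintegral_ball_fun_norm_addHaar {f : ℝ → ℝ≥0∞} (hf : Measurable f) (R : ℝ) :
    ∫⁻ x in ball 0 R, f ‖x‖ ∂μ = finrank ℝ E * μ (ball 0 1) *
      ∫⁻ r in Ioo 0 R, ENNReal.ofReal (r ^ (finrank ℝ E - 1)) * f r := by
  have indicator_ball (x : E) :
      (ball 0 R).indicator (fun x ↦ f ‖x‖) x = (Iio R).indicator f ‖x‖ := by
    simp [indicator]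
  have indicator_Iio (r : ℝ) : ENNReal.ofReal (r ^ (finrank ℝ E - 1)) * (Iio R).indicator f r
      = (Iio R).indicator (fun r ↦ ENNReal.ofReal (r ^ (finrank ℝ E - 1)) * f r) r :=
    (indicator_mul_right (Iio R) (fun r ↦ ENNReal.ofReal (r ^ (finrank ℝ E - 1))) f).symm
  simp only [← lintegral_indicator measurableSet_ball, indicator_ball,
    lintegral_fun_norm_addHaar μ (hf.indicator measurableSet_Iio), indicator_Iio,
    setLIntegral_indicator measurableSet_Iio, Iio_inter_Ioi]

theorem lintegral_ball_weighted_norm_fderiv_rpow {α Δ p R : ℝ} (hΔ : 0 ≤ Δ)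
    (hp : 0 < finrank ℝ E - p * (1 + α)) (hR₀ : 0 < R) (hR₁ : R ≤ 1) :
    ∫⁻ x in ball 0 R, ENNReal.ofReal
        ((‖fderiv ℝ (fun y : E ↦ (-Real.log ‖y‖) ^ Δ) x‖ * ‖x‖ ^ (-α)) ^ p) ∂μ
      = ENNReal.ofReal (Δ ^ p * (finrank ℝ E - p * (1 + α)) ^ (-((Δ - 1) * p + 1))) *
        (finrank ℝ E * μ (ball 0 1) * upperIncompleteGamma ((Δ - 1) * p + 1)
          ((finrank ℝ E - p * (1 + α)) * -Real.log R)) := by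
  set radial : ℝ → ℝ := fun r ↦ (Δ * (-Real.log r) ^ (Δ - 1) / r * r ^ (-α)) ^ p
  have integrand_eq_radial : ∀ᵐ x ∂μ.restrict (ball 0 R),
      ENNReal.ofReal ((‖fderiv ℝ (fun y : E ↦ (-Real.log ‖y‖) ^ Δ) x‖ * ‖x‖ ^ (-α)) ^ p)
        = ENNReal.ofReal (radial ‖x‖) := by
    filter_upwards [ae_restrict_of_ae ae_differentiableAt_norm,
      ae_restrict_mem measurableSet_ball] with x hx hxR
    rw [norm_fderiv_neg_log_norm_rpow hΔ hx ((mem_ball_zero_iff.1 hxR).trans_le hR₁)]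
  have radial_eq : ∀ r ∈ Ioo 0 R,
      ENNReal.ofReal (r ^ (finrank ℝ E - 1)) * ENNReal.ofReal (radial r) =
        ENNReal.ofReal (Δ ^ p) * ENNReal.ofReal (r ^ (finrank ℝ E - p * (1 + α) - 1) *
          (-Real.log r) ^ ((Δ - 1) * p + 1 - 1)) := by
    rintro r ⟨hr₀, hrR⟩
    rw [← ofReal_mul (by positivity), ← ofReal_mul (by positivity),
      pow_mul_weighted_deriv_rpow p _ hΔ hr₀ (hrR.le.trans hR₁), Nat.cast_pred finrank_pos]
    ring_nf
  rw [lintegral_congr_ae integrand_eq_radial,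
    lintegral_ball_fun_norm_addHaar μ (f := fun r ↦ ENNReal.ofReal (radial r)) (by fun_prop),
    setLIntegral_congr_fun measurableSet_Ioo radial_eq, lintegral_const_mul _ (by fun_prop),
    lintegral_Ioo_rpow_mul_neg_log_rpow _ hp hR₀ hR₁, ofReal_mul (by positivity)]
  ring

theorem rpow_one_div_lintegral_ball_weighted_norm_fderiv {α Δ p R : ℝ} (hΔ : 0 ≤ Δ)
    (hp₀ : 0 < p) (hp : 0 < finrank ℝ E - p * (1 + α)) (hR₀ : 0 < R) (hR₁ : R ≤ 1) :
    (∫⁻ x in ball 0 R, ENNReal.ofReal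
        ((‖fderiv ℝ (fun y : E ↦ (-Real.log ‖y‖) ^ Δ) x‖ * ‖x‖ ^ (-α)) ^ p) ∂μ) ^ (1 / p)
      = ENNReal.ofReal (Δ * (finrank ℝ E - p * (1 + α)) ^ (-(Δ - 1) - 1 / p)) *
        (finrank ℝ E * μ (ball 0 1) * upperIncompleteGamma ((Δ - 1) * p + 1)
          ((finrank ℝ E - p * (1 + α)) * -Real.log R)) ^ (1 / p) := by
  have hexp : -((Δ - 1) * p + 1) * (1 / p) = -(Δ - 1) - 1 / p := by
    field_simp
    ring
  rw [lintegral_ball_weighted_norm_fderiv_rpow μ hΔ hp hR₀ hR₁,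
    mul_rpow_of_nonneg _ _ (by positivity), ofReal_rpow_of_nonneg (by positivity) (by positivity),
    Real.mul_rpow (by positivity) (by positivity), ← Real.rpow_mul hΔ, ← Real.rpow_mul hp.le,
    mul_one_div_cancel hp₀.ne', Real.rpow_one, hexp]

theorem grad_u_estimate_general {α Δ R : ℝ} (hα : -1 < α) (hΔ : 1 ≤ Δ) (hR₀ : 0 < R)
    (hR₁ : R ≤ 1) :
    (∀ x : E, DifferentiableAt ℝ (‖·‖) x → ‖x‖ < R →
      ‖fderiv ℝ (fun y : E ↦ (-Real.log ‖y‖) ^ Δ) x‖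
        = Δ * (-Real.log ‖x‖) ^ (Δ - 1) / ‖x‖) ∧
    ∃ c₁ c₂ : ℝ, 0 < c₁ ∧ c₁ ≤ c₂ ∧ ∀ p : ℝ, 1 ≤ p → p < finrank ℝ E / (1 + α) →
      (∫⁻ x in ball 0 R, ENNReal.ofReal
        ((‖fderiv ℝ (fun y : E ↦ (-Real.log ‖y‖) ^ Δ) x‖ * ‖x‖ ^ (-α)) ^ p) ∂μ) ^ (1 / p) ∈
      Icc (ENNReal.ofReal (c₁ * (finrank ℝ E - p * (1 + α)) ^ (-(Δ - 1) - 1 / p)))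
        (ENNReal.ofReal (c₂ * (finrank ℝ E - p * (1 + α)) ^ (-(Δ - 1) - 1 / p))) := by
  have hΔ₀ : 0 < Δ := by linarith
  have hα₁ : 0 < 1 + α := by linarith
  have hlogR : 0 ≤ -Real.log R := neg_nonneg.2 (Real.log_nonpos hR₀.le hR₁)
  refine ⟨fun x hx hxR ↦ norm_fderiv_neg_log_norm_rpow hΔ₀.le hx (hxR.trans_le hR₁), ?_⟩
  obtain ⟨b₁, b₂, hb₁, hb₁₂, gamma_bounds⟩ := exists_bounds_rpow_mul_upperIncompleteGamma
    (mul_ne_zero (Nat.cast_ne_zero.2 finrank_pos.ne') (measure_ball_pos μ 0 one_pos).ne')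
    (mul_ne_top (natCast_ne_top (finrank ℝ E)) measure_ball_lt_top.ne)
    ((Δ - 1) * (finrank ℝ E / (1 + α)) + 1) (finrank ℝ E * -Real.log R)
  refine ⟨Δ * b₁, Δ * b₂, by positivity, by gcongr, fun p hp₁ hp ↦ ?_⟩
  have hp₀ : 0 < p := by linarith
  have hε : 0 < finrank ℝ E - p * (1 + α) := sub_pos.2 ((lt_div_iff₀ hα₁).1 hp)
  have hεd : finrank ℝ E - p * (1 + α) ≤ finrank ℝ E := sub_le_self _ (by positivity)
  have hΔp : 0 ≤ (Δ - 1) * p := mul_nonneg (by linarith) hp₀.le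
  have hΔp_le : (Δ - 1) * p ≤ (Δ - 1) * (finrank ℝ E / (1 + α)) :=
    mul_le_mul_of_nonneg_left hp.le (by linarith)
  obtain ⟨lower, upper⟩ := gamma_bounds (1 / p) ⟨by positivity, (div_le_one hp₀).2 hp₁⟩
    ((Δ - 1) * p + 1) ⟨by linarith, by linarith⟩
    ((finrank ℝ E - p * (1 + α)) * -Real.log R) ⟨by positivity, by gcongr⟩
  rw [rpow_one_div_lintegral_ball_weighted_norm_fderiv μ hΔ₀.le hp₀ hε hR₀ hR₁,
    mul_right_comm Δ b₁, mul_right_comm Δ b₂, ofReal_mul' hb₁.le,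
    ofReal_mul' (hb₁.le.trans hb₁₂)]
  exact ⟨mul_le_mul_right lower _, mul_le_mul_right upper _⟩

end RadialFunctions

end

/-- For `d ≥ 2`, `α > −1` with `p₀ = d/(1+α) > 1` and `Δ > 1`, the function
`u(x) = (−log|x|)^Δ` on `0 < |x| < 1/e` satisfies
`|grad u(x)| = Δ(−log|x|)^{Δ−1}/|x|`, and for all `p ∈ (1, p₀)` the weighted norm
`( ∫_{|x|<1/e} (|grad u(x)|·|x|^{−α})^p dx )^{1/p}` is comparable (with constants
depending only on `d, α, Δ`) to `(d − p(1+α))^{−(Δ−1) − 1/p}`. -/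
theorem grad_u_estimate (d : ℕ) (hd : 2 ≤ d) (α Δ : ℝ) (hα : -1 < α)
    (hp₀ : 1 < (d : ℝ) / (1 + α)) (hΔ : 1 < Δ) :
    (∀ x : EuclideanSpace ℝ (Fin d), 0 < ‖x‖ → ‖x‖ < 1 / Real.exp 1 →
      ‖fderiv ℝ (fun y : EuclideanSpace ℝ (Fin d) => (-Real.log ‖y‖) ^ Δ) x‖
        = Δ * (-Real.log ‖x‖) ^ (Δ - 1) / ‖x‖) ∧
    ∃ c₁ c₂ : ℝ, 0 < c₁ ∧ c₁ ≤ c₂ ∧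
      ∀ p : ℝ, 1 < p → p < (d : ℝ) / (1 + α) →
        ENNReal.ofReal (c₁ * ((d : ℝ) - p * (1 + α)) ^ (-(Δ - 1) - 1 / p))
          ≤ (∫⁻ x in {x : EuclideanSpace ℝ (Fin d) | ‖x‖ < 1 / Real.exp 1},
              ENNReal.ofReal
                ((‖fderiv ℝ (fun y : EuclideanSpace ℝ (Fin d) => (-Real.log ‖y‖) ^ Δ) x‖
                    * ‖x‖ ^ (-α)) ^ p)) ^ (1 / p) ∧
        (∫⁻ x in {x : EuclideanSpace ℝ (Fin d) | ‖x‖ < 1 / Real.exp 1},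
              ENNReal.ofReal
                ((‖fderiv ℝ (fun y : EuclideanSpace ℝ (Fin d) => (-Real.log ‖y‖) ^ Δ) x‖
                    * ‖x‖ ^ (-α)) ^ p)) ^ (1 / p)
          ≤ ENNReal.ofReal (c₂ * ((d : ℝ) - p * (1 + α)) ^ (-(Δ - 1) - 1 / p)) := by
  have : NeZero d := ⟨by omega⟩
  obtain ⟨grad_eq, estimate⟩ := grad_u_estimate_general
    (volume : Measure (EuclideanSpace ℝ (Fin d))) hα hΔ.le (R := 1 / Real.exp 1) (by positivity)
    ((div_le_one (Real.exp_pos 1)).2 (Real.one_le_exp zero_le_one))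
  simp only [finrank_euclideanSpace_fin, ball_zero_eq] at estimate
  obtain ⟨c₁, c₂, hc₁, hc₁₂, bounds⟩ := estimate
  exact ⟨fun x hx ↦ grad_eq x (differentiableAt_id.norm ℝ (norm_pos_iff.1 hx)),
    c₁, c₂, hc₁, hc₁₂, fun p hp ↦ bounds p hp.le⟩
end

section
/- Let d ≥ 2 and α > −1 with p₀ := d/(1+α) > 1. Then there exist a constant C > 0 and a function f : ℝ^d → ℝ, not almost everywhere zero, supported in the closed unit ball B = {x : |x| ≤ 1}, continuously differentiable on B \ {0}, such that for every p ∈ (1, p₀): ( ∫_B ( |f(x)| · |x|^{−1−α} )^p dx )^{1/p} ≥ C · ( p/(d − p(1+α)) ) · ( ∫_B ( |grad f(x)| · |x|^{−α} )^p dx )^{1/p}, with both sides finite. Consequently the constant p/|d − p(1+α)| in the weighted Poincaré inequality cannot be improved as p → p₀ from below. -/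
open MeasureTheory Set ENNReal

/-!
The radial function `f x = (-log ‖x‖) ^ (n + 1)` on the unit ball is a near-extremiser. Write
`d` for the dimension and `ε = d - p (1 + α)`. In polar coordinates, with `r = exp (-t)`, both
integrals become Gamma integrals, and up to the same factor (the area of the unit sphere)

* `∫ (|f| ‖x‖ ^ (-1 - α)) ^ p` is `Γ((n + 1) p + 1) / ε ^ ((n + 1) p + 1)`,
* `∫ (|∇f| ‖x‖ ^ (-α)) ^ p` is `(n + 1) ^ p Γ(n p + 1) / ε ^ (n p + 1)`.

Log-convexity gives `x ^ p Γ(x) ≤ Γ(x + p)` for `1 ≤ p`; at `x = n p + 1` it bounds the ratio of the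
two norms below by `n / (n + 1) * (p / ε)`. So every constant `C < 1` is attained, by a function
depending neither on `p` nor on `α`.
-/

open Module (finrank)
open Metric (ball closedBall)
open Real (Gamma exp log)
open scoped ContDiff

theorem neg_log_pos_of_mem_Ioo {r : ℝ} (hr : r ∈ Ioo 0 1) : 0 < -log r :=
  neg_pos.2 (Real.log_neg hr.1 hr.2)

theorem rpow_mul_Gamma_le_Gamma_add {x s : ℝ} (hx : 0 < x) (hs : 1 ≤ s) :
    x ^ s * Gamma x ≤ Gamma (x + s) := by
  have hs₀ : 0 < s := one_pos.trans_le hs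
  have hxs : 0 < x + s := by positivity
  have hΓx := Real.Gamma_pos_of_pos hx
  have log_Gamma_add_one : log (Gamma (x + 1)) = log x + log (Gamma x) := by
    rw [Real.Gamma_add_one hx.ne', Real.log_mul hx.ne' hΓx.ne']
  have convexity : log (Gamma (x + 1))
      ≤ (1 - 1 / s) * log (Gamma x) + 1 / s * log (Gamma (x + s)) := by
    have hcomb : (1 - 1 / s) * x + 1 / s * (x + s) = x + 1 := by field_simp; ring
    have h := Real.convexOn_log_Gamma.2 hx hxs (sub_nonneg.2 ((div_le_one hs₀).2 hs))
      (by positivity) (sub_add_cancel 1 (1 / s))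
    simpa only [Function.comp_apply, smul_eq_mul, hcomb] using h
  rw [← Real.log_le_log_iff (by positivity) (Real.Gamma_pos_of_pos hxs),
    Real.log_mul (by positivity) hΓx.ne', Real.log_rpow hx]
  rw [log_Gamma_add_one] at convexity
  field_simp at convexity
  linarith

theorem rpow_mul_Gamma_div_rpow_le (n : ℕ) {p ε : ℝ} (hp : 1 ≤ p) (hε : 0 < ε) :
    (n / (n + 1) * (p / ε)) ^ p * ((n + 1) ^ p * (Gamma (n * p + 1) / ε ^ (n * p + 1)))
      ≤ Gamma ((n + 1) * p + 1) / ε ^ ((n + 1) * p + 1) := by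
  have : 0 < p := one_pos.trans_le hp
  have := Real.Gamma_pos_of_pos (s := n * p + 1) (by positivity)
  calc
    _ = (n * p) ^ p * Gamma (n * p + 1) / ε ^ ((n + 1) * p + 1) := by
      have hbase : n / (n + 1) * (p / ε) * (n + 1) = n * p / ε := by field_simp
      have hexp : (n + 1) * p + 1 = p + (n * p + 1) := by ring
      rw [← mul_assoc, ← Real.mul_rpow (by positivity) (by positivity), hbase,
        Real.div_rpow (by positivity) hε.le, div_mul_div_comm, hexp, Real.rpow_add hε p]
    _ ≤ (n * p + 1) ^ p * Gamma (n * p + 1) / ε ^ ((n + 1) * p + 1) := by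
      gcongr
      linarith
    _ ≤ Gamma (n * p + 1 + p) / ε ^ ((n + 1) * p + 1) := by
      gcongr
      exact rpow_mul_Gamma_le_Gamma_add (by positivity) hp
    _ = _ := by ring_nf

theorem mul_rpow_one_div_le {a b c : ℝ≥0∞} {p : ℝ} (hp : 0 < p) (h : c ^ p * a ≤ b) :
    c * a ^ (1 / p) ≤ b ^ (1 / p) := by
  rw [one_div, ENNReal.le_rpow_inv_iff hp, ENNReal.mul_rpow_of_nonneg _ _ hp.le,
    ENNReal.rpow_inv_rpow hp.ne']
  exact h

section RadialIntegrals

variable {F : Type*} [NormedAddCommGroup F] [NormedSpace ℝ F]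

theorem image_exp_neg_Ioi_zero : (fun t : ℝ ↦ exp (-t)) '' Ioi 0 = Ioo 0 1 := by
  ext y
  constructor
  · rintro ⟨t, ht, rfl⟩
    exact ⟨Real.exp_pos _, Real.exp_lt_one_iff.2 (neg_lt_zero.2 ht)⟩
  · rintro ⟨hy₀, hy₁⟩
    exact ⟨-log y, neg_log_pos_of_mem_Ioo ⟨hy₀, hy₁⟩, by simp [Real.exp_log hy₀]⟩

theorem hasDerivAt_exp_neg (t : ℝ) : HasDerivAt (fun t ↦ exp (-t)) (-exp (-t)) t := by
  simpa using (hasDerivAt_neg t).exp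

theorem injective_exp_neg : Function.Injective fun t : ℝ ↦ exp (-t) :=
  Real.exp_injective.comp neg_injective

theorem integrableOn_Ioo_zero_one_iff_exp_neg (g : ℝ → F) :
    IntegrableOn g (Ioo 0 1) ↔ IntegrableOn (fun t ↦ exp (-t) • g (exp (-t))) (Ioi 0) := by
  rw [← image_exp_neg_Ioi_zero, integrableOn_image_iff_integrableOn_abs_deriv_smul
    measurableSet_Ioi (fun t _ ↦ (hasDerivAt_exp_neg t).hasDerivWithinAt) injective_exp_neg.injOn]
  simp only [abs_neg, Real.abs_exp]

theorem integral_Ioo_zero_one_eq_exp_neg (g : ℝ → F) :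
    ∫ y in Ioo 0 1, g y = ∫ t in Ioi 0, exp (-t) • g (exp (-t)) := by
  rw [← image_exp_neg_Ioi_zero, integral_image_eq_integral_abs_deriv_smul
    measurableSet_Ioi (fun t _ ↦ (hasDerivAt_exp_neg t).hasDerivWithinAt) injective_exp_neg.injOn]
  simp only [abs_neg, Real.abs_exp]

theorem exp_neg_smul_neg_log_rpow_mul_rpow (s a t : ℝ) :
    exp (-t) • ((-log (exp (-t))) ^ s * exp (-t) ^ (a - 1)) = t ^ s * exp (-(a * t)) := by
  have hexp : exp (-t) * exp (-t * (a - 1)) = exp (-(a * t)) := by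
    rw [← Real.exp_add]
    ring_nf
  rw [Real.log_exp, neg_neg, ← Real.exp_mul, smul_eq_mul, mul_left_comm, hexp]

variable {s a : ℝ}

theorem integrableOn_neg_log_rpow_mul_rpow (hs : -1 < s) (ha : 0 < a) :
    IntegrableOn (fun y : ℝ ↦ (-log y) ^ s * y ^ (a - 1)) (Ioo 0 1) := by
  rw [integrableOn_Ioo_zero_one_iff_exp_neg]
  simp only [exp_neg_smul_neg_log_rpow_mul_rpow]
  simpa using integrableOn_rpow_mul_exp_neg_mul_rpow hs one_pos ha

theorem integral_neg_log_rpow_mul_rpow (hs : -1 < s) (ha : 0 < a) :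
    ∫ y : ℝ in Ioo 0 1, (-log y) ^ s * y ^ (a - 1) = Gamma (s + 1) / a ^ (s + 1) := by
  rw [integral_Ioo_zero_one_eq_exp_neg]
  simp only [exp_neg_smul_neg_log_rpow_mul_rpow]
  have h := Real.integral_rpow_mul_exp_neg_mul_Ioi (neg_lt_iff_pos_add.1 hs) ha
  rw [add_sub_cancel_right] at h
  rw [h, Real.div_rpow zero_le_one ha.le, Real.one_rpow, one_div_mul_eq_div]

variable {E : Type*} [NormedAddCommGroup E] [NormedSpace ℝ E] [FiniteDimensional ℝ E]
  [Nontrivial E] [MeasurableSpace E] [BorelSpace E] (μ : Measure E) [μ.IsAddHaarMeasure]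

theorem setIntegral_ball_fun_norm (g : ℝ → F) (r : ℝ) :
    ∫ x in ball 0 r, g ‖x‖ ∂μ
      = μ.toSphere.real univ • ∫ y in Ioo 0 r, y ^ (finrank ℝ E - 1) • g y := by
  have hind : (ball (0 : E) r).indicator (fun x ↦ g ‖x‖) = fun x ↦ (Iio r).indicator g ‖x‖ := by
    classical
    ext x
    simp only [indicator_apply, mem_ball_zero_iff, mem_Iio]
  rw [← integral_indicator Metric.isOpen_ball.measurableSet, hind, integral_fun_norm_addHaar,
    μ.toSphere_real_apply_univ]
  simp only [← indicator_smul_apply (Iio r) fun y : ℝ ↦ y ^ (finrank ℝ E - 1)]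
  rw [setIntegral_indicator measurableSet_Iio, Ioi_inter_Iio, ← Nat.cast_smul_eq_nsmul ℝ, smul_smul]

theorem pow_smul_neg_log_rpow_mul_rpow {m : ℕ} (hm : 0 < m) (s q : ℝ) {y : ℝ} (hy : 0 < y) :
    y ^ (m - 1) • ((-log y) ^ s * y ^ (-q)) = (-log y) ^ s * y ^ ((m - q) - 1) := by
  have hexp : (m - q) - 1 = ((m - 1 : ℕ) : ℝ) + -q := by
    rw [Nat.cast_pred hm]
    ring
  rw [hexp, Real.rpow_add hy, Real.rpow_natCast, smul_eq_mul, mul_left_comm]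

variable {q : ℝ}

theorem integrableOn_ball_neg_log_norm_rpow_mul_norm_rpow (hs : -1 < s) (hq : q < finrank ℝ E) :
    IntegrableOn (fun x : E ↦ (-log ‖x‖) ^ s * ‖x‖ ^ (-q)) (ball 0 1) μ := by
  rw [integrableOn_fun_norm_addHaar μ (f := fun y ↦ (-log y) ^ s * y ^ (-q))]
  refine (integrableOn_neg_log_rpow_mul_rpow hs (sub_pos.2 hq)).congr_fun (fun y hy ↦ ?_)
    measurableSet_Ioo
  exact (pow_smul_neg_log_rpow_mul_rpow Module.finrank_pos s q hy.1).symm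

theorem integral_ball_neg_log_norm_rpow_mul_norm_rpow (hs : -1 < s) (hq : q < finrank ℝ E) :
    ∫ x in ball (0 : E) 1, (-log ‖x‖) ^ s * ‖x‖ ^ (-q) ∂μ
      = μ.toSphere.real univ * (Gamma (s + 1) / (finrank ℝ E - q) ^ (s + 1)) := by
  rw [setIntegral_ball_fun_norm μ (fun y ↦ (-log y) ^ s * y ^ (-q)), smul_eq_mul,
    ← integral_neg_log_rpow_mul_rpow hs (sub_pos.2 hq)]
  congr 1
  exact setIntegral_congr_fun measurableSet_Ioo fun y hy ↦
    pow_smul_neg_log_rpow_mul_rpow Module.finrank_pos s q hy.1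

theorem restrict_norm_le_eq_restrict_ball (r : ℝ) :
    μ.restrict {x | ‖x‖ ≤ r} = μ.restrict (ball 0 r) := by
  have hball : ball 0 r =ᵐ[μ] closedBall 0 r :=
    ae_eq_of_subset_of_measure_ge Metric.ball_subset_closedBall
      (μ.addHaar_closedBall_eq_addHaar_ball 0 r).le
      measurableSet_ball.nullMeasurableSet measure_closedBall_lt_top.ne
  have hset : {x : E | ‖x‖ ≤ r} = closedBall 0 r := by
    ext x
    rw [mem_closedBall_zero_iff, mem_ofPred_eq]
  rw [hset, Measure.restrict_congr_set hball]

theorem ae_restrict_norm_le_norm_mem_Ioo (r : ℝ) :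
    ∀ᵐ x ∂μ.restrict {x | ‖x‖ ≤ r}, ‖x‖ ∈ Ioo 0 r := by
  rw [restrict_norm_le_eq_restrict_ball]
  filter_upwards [ae_restrict_mem measurableSet_ball, ae_restrict_of_ae (μ.ae_ne 0)] with x hx hx₀
  exact ⟨norm_pos_iff.2 hx₀, mem_ball_zero_iff.1 hx⟩

theorem lintegral_norm_le_one_neg_log_norm_rpow_mul_norm_rpow (hs : -1 < s) (hq : q < finrank ℝ E) :
    ∫⁻ x in {x : E | ‖x‖ ≤ 1}, ENNReal.ofReal ((-log ‖x‖) ^ s * ‖x‖ ^ (-q)) ∂μ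
      = ENNReal.ofReal (μ.toSphere.real univ *
        (Gamma (s + 1) / (finrank ℝ E - q) ^ (s + 1))) := by
  have h_nonneg : ∀ᵐ x ∂μ.restrict {x | ‖x‖ ≤ 1}, 0 ≤ (-log ‖x‖) ^ s * ‖x‖ ^ (-q) := by
    filter_upwards [ae_restrict_norm_le_norm_mem_Ioo μ 1] with x hx
    have : 0 ≤ -log ‖x‖ := (neg_log_pos_of_mem_Ioo hx).le
    positivity
  rw [restrict_norm_le_eq_restrict_ball] at h_nonneg ⊢
  rw [← integral_ball_neg_log_norm_rpow_mul_norm_rpow μ hs hq, ofReal_integral_eq_lintegral_ofReal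
    (integrableOn_ball_neg_log_norm_rpow_mul_norm_rpow μ hs hq) h_nonneg]

end RadialIntegrals

/-- The function `(-log ‖x‖) ^ n` on the closed unit ball, extended by `0`: the near-extremisers
of the weighted Poincaré inequality. Its value at the origin is junk, as `log 0 = 0`. -/
noncomputable def truncNegLogPow {E : Type*} [Norm E] (n : ℕ) : E → ℝ :=
  {x | ‖x‖ ≤ 1}.indicator fun x ↦ (-log ‖x‖) ^ n

namespace truncNegLogPow

section Norm

variable {E : Type*} [Norm E] (n : ℕ) {x : E}

theorem eq_of_norm_le_one (hx : ‖x‖ ≤ 1) : truncNegLogPow n x = (-log ‖x‖) ^ n :=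
  indicator_of_mem (s := {x : E | ‖x‖ ≤ 1}) hx _

theorem eq_zero_of_one_lt_norm (hx : 1 < ‖x‖) : truncNegLogPow n x = 0 :=
  indicator_of_notMem (s := {x : E | ‖x‖ ≤ 1}) (not_le.2 hx) _

theorem pos_of_norm_mem_Ioo (hx : ‖x‖ ∈ Ioo 0 1) : 0 < truncNegLogPow n x := by
  rw [eq_of_norm_le_one n hx.2.le]
  exact pow_pos (neg_log_pos_of_mem_Ioo hx) n

end Norm

variable {E : Type*} [NormedAddCommGroup E]

theorem not_ae_eq_zero [NormedSpace ℝ E] [FiniteDimensional ℝ E] [Nontrivial E] [MeasurableSpace E]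
    [BorelSpace E] (μ : Measure E) [μ.IsAddHaarMeasure] (n : ℕ) :
    ¬ truncNegLogPow n =ᵐ[μ] 0 := by
  intro h
  have hfalse : ∀ᵐ _ ∂μ.restrict {x | ‖x‖ ≤ 1}, False := by
    filter_upwards [ae_restrict_norm_le_norm_mem_Ioo μ 1, ae_restrict_of_ae h] with x hx hx'
    exact (pos_of_norm_mem_Ioo n hx).ne' hx'
  rw [restrict_norm_le_eq_restrict_ball, ae_iff] at hfalse
  simp [(Metric.measure_ball_pos μ (0 : E) one_pos).ne'] at hfalse

variable [InnerProductSpace ℝ E]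

theorem contDiffOn (n : ℕ) {k : WithTop ℕ∞} :
    ContDiffOn ℝ k (truncNegLogPow n) ({x : E | ‖x‖ ≤ 1} \ {0}) := by
  have hsmooth : ContDiffOn ℝ k (fun x : E ↦ (-log ‖x‖) ^ n) {0}ᶜ := fun x hx ↦
    (((contDiffAt_norm ℝ hx).log (norm_ne_zero_iff.2 hx)).neg.pow n).contDiffWithinAt
  exact (hsmooth.mono fun _ hx ↦ hx.2).congr fun x hx ↦ eq_of_norm_le_one n hx.1

theorem norm_fderiv (n : ℕ) {x : E} (hx : ‖x‖ ∈ Ioo 0 1) :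
    ‖fderiv ℝ (truncNegLogPow (n + 1)) x‖ = (n + 1) * (-log ‖x‖) ^ n * ‖x‖⁻¹ := by
  have hx₀ : x ≠ 0 := norm_pos_iff.1 hx.1
  have : Nontrivial E := ⟨x, 0, hx₀⟩
  have heq : truncNegLogPow (n + 1) =ᶠ[nhds x] fun y ↦ (-log ‖y‖) ^ (n + 1) := by
    filter_upwards [continuous_norm.continuousAt.eventually_lt_const hx.2] with y hy
    exact eq_of_norm_le_one (n + 1) hy.le
  have hnorm : DifferentiableAt ℝ (‖·‖) x := (contDiffAt_norm ℝ hx₀).differentiableAt one_ne_zero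
  have hprofile : HasDerivAt (fun r : ℝ ↦ (-log r) ^ (n + 1))
      (((n + 1 : ℕ) : ℝ) * (-log ‖x‖) ^ n * -‖x‖⁻¹) ‖x‖ :=
    (Real.hasDerivAt_log hx.1.ne').fun_neg.fun_pow (n + 1)
  have hfderiv := (hprofile.comp_hasFDerivAt x hnorm.hasFDerivAt).fderiv
  have hlog : 0 ≤ -log ‖x‖ := (neg_log_pos_of_mem_Ioo hx).le
  rw [Function.comp_def] at hfderiv
  rw [heq.fderiv_eq, hfderiv, norm_smul, norm_fderiv_norm hnorm, mul_one, mul_neg, norm_neg,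
    Real.norm_of_nonneg (by positivity), Nat.cast_succ]

section WeightedIntegrals

variable [FiniteDimensional ℝ E] [Nontrivial E] [MeasurableSpace E] [BorelSpace E]
  (μ : Measure E) [μ.IsAddHaarMeasure] (n : ℕ) {α p : ℝ}

theorem lintegral_abs_mul_norm_rpow_rpow (hp : 0 ≤ p) (hpα : p * (1 + α) < finrank ℝ E) :
    ∫⁻ x in {x : E | ‖x‖ ≤ 1},
        ENNReal.ofReal ((|truncNegLogPow n x| * ‖x‖ ^ (-1 - α)) ^ p) ∂μ
      = ENNReal.ofReal (μ.toSphere.real univ *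
        (Gamma (n * p + 1) / (finrank ℝ E - p * (1 + α)) ^ (n * p + 1))) := by
  have hnp : -1 < n * p := neg_one_lt_zero.trans_le (by positivity)
  rw [← lintegral_norm_le_one_neg_log_norm_rpow_mul_norm_rpow μ hnp hpα]
  refine lintegral_congr_ae ?_
  filter_upwards [ae_restrict_norm_le_norm_mem_Ioo μ 1] with x hx
  have hlog : 0 ≤ -log ‖x‖ := (neg_log_pos_of_mem_Ioo hx).le
  rw [abs_of_pos (pos_of_norm_mem_Ioo n hx), eq_of_norm_le_one n hx.2.le,
    Real.mul_rpow (by positivity) (by positivity), ← Real.rpow_natCast_mul hlog,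
    ← Real.rpow_mul hx.1.le]
  ring_nf

theorem lintegral_norm_fderiv_mul_norm_rpow_rpow (hp : 0 ≤ p)
    (hpα : p * (1 + α) < finrank ℝ E) :
    ∫⁻ x in {x : E | ‖x‖ ≤ 1},
        ENNReal.ofReal ((‖fderiv ℝ (truncNegLogPow (n + 1)) x‖ * ‖x‖ ^ (-α)) ^ p) ∂μ
      = ENNReal.ofReal ((n + 1) ^ p * (μ.toSphere.real univ *
        (Gamma (n * p + 1) / (finrank ℝ E - p * (1 + α)) ^ (n * p + 1)))) := by
  rw [ENNReal.ofReal_mul (by positivity), ← lintegral_abs_mul_norm_rpow_rpow μ n hp hpα,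
    ← lintegral_const_mul' _ _ ENNReal.ofReal_ne_top]
  refine lintegral_congr_ae ?_
  filter_upwards [ae_restrict_norm_le_norm_mem_Ioo μ 1] with x hx
  have hlog : 0 ≤ -log ‖x‖ := (neg_log_pos_of_mem_Ioo hx).le
  have hweight : ‖x‖⁻¹ * ‖x‖ ^ (-α) = ‖x‖ ^ (-1 - α) := by
    rw [← Real.rpow_neg_one, ← Real.rpow_add hx.1, sub_eq_add_neg]
  rw [norm_fderiv n hx, mul_assoc, hweight, mul_assoc,
    Real.mul_rpow (by positivity) (by positivity), ENNReal.ofReal_mul (by positivity),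
    abs_of_pos (pos_of_norm_mem_Ioo n hx), eq_of_norm_le_one n hx.2.le]

theorem reverse_poincare (hp : 1 ≤ p) (hpα : p * (1 + α) < finrank ℝ E) :
    ENNReal.ofReal (n / (n + 1) * (p / (finrank ℝ E - p * (1 + α)))) *
        (∫⁻ x in {x : E | ‖x‖ ≤ 1},
          ENNReal.ofReal ((‖fderiv ℝ (truncNegLogPow (n + 1)) x‖ * ‖x‖ ^ (-α)) ^ p) ∂μ) ^ (1 / p)
      ≤ (∫⁻ x in {x : E | ‖x‖ ≤ 1},
          ENNReal.ofReal ((|truncNegLogPow (n + 1) x| * ‖x‖ ^ (-1 - α)) ^ p) ∂μ) ^ (1 / p) := by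
  have hp₀ : 0 < p := one_pos.trans_le hp
  have hε : 0 < finrank ℝ E - p * (1 + α) := sub_pos.2 hpα
  refine mul_rpow_one_div_le hp₀ ?_
  rw [lintegral_abs_mul_norm_rpow_rpow μ _ hp₀.le hpα,
    lintegral_norm_fderiv_mul_norm_rpow_rpow μ _ hp₀.le hpα,
    ENNReal.ofReal_rpow_of_nonneg (by positivity) hp₀.le, ← ENNReal.ofReal_mul (by positivity),
    Nat.cast_succ, mul_left_comm _ (μ.toSphere.real univ), mul_left_comm _ (μ.toSphere.real univ)]
  exact ENNReal.ofReal_le_ofReal (mul_le_mul_of_nonneg_left (rpow_mul_Gamma_div_rpow_le n hp hε)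
    measureReal_nonneg)

end WeightedIntegrals

end truncNegLogPow

theorem poincare_sharp_bounded_general {E : Type*} [NormedAddCommGroup E] [InnerProductSpace ℝ E]
    [FiniteDimensional ℝ E] [Nontrivial E] [MeasurableSpace E] [BorelSpace E]
    (μ : Measure E) [μ.IsAddHaarMeasure] {C : ℝ} (hC : C < 1) :
    ∃ f : E → ℝ,
      ¬ (f =ᵐ[μ] 0) ∧
      (∀ x : E, 1 < ‖x‖ → f x = 0) ∧
      ContDiffOn ℝ ω f ({x : E | ‖x‖ ≤ 1} \ {0}) ∧
      ∀ α p : ℝ, 1 ≤ p → p * (1 + α) < finrank ℝ E →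
        (∫⁻ x in {x : E | ‖x‖ ≤ 1},
            ENNReal.ofReal ((|f x| * ‖x‖ ^ (-1 - α)) ^ p) ∂μ) ^ (1 / p) ≠ ⊤ ∧
        (∫⁻ x in {x : E | ‖x‖ ≤ 1},
            ENNReal.ofReal ((‖fderiv ℝ f x‖ * ‖x‖ ^ (-α)) ^ p) ∂μ) ^ (1 / p) ≠ ⊤ ∧
        ENNReal.ofReal (C * (p / (finrank ℝ E - p * (1 + α)))) *
            (∫⁻ x in {x : E | ‖x‖ ≤ 1},
              ENNReal.ofReal ((‖fderiv ℝ f x‖ * ‖x‖ ^ (-α)) ^ p) ∂μ) ^ (1 / p)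
          ≤ (∫⁻ x in {x : E | ‖x‖ ≤ 1},
              ENNReal.ofReal ((|f x| * ‖x‖ ^ (-1 - α)) ^ p) ∂μ) ^ (1 / p) := by
  obtain ⟨n, hn⟩ := exists_nat_one_div_lt (sub_pos.2 hC)
  have hCn : C ≤ n / (n + 1) := by
    have : (n : ℝ) / (n + 1) = 1 - 1 / (n + 1) := by field_simp; ring
    linarith
  refine ⟨truncNegLogPow (n + 1), truncNegLogPow.not_ae_eq_zero μ _,
    fun x ↦ truncNegLogPow.eq_zero_of_one_lt_norm _, truncNegLogPow.contDiffOn _,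
    fun α p hp hpα ↦ ?_⟩
  have hp₀ : 0 ≤ p := zero_le_one.trans hp
  have : 0 ≤ finrank ℝ E - p * (1 + α) := (sub_pos.2 hpα).le
  refine ⟨?_, ?_, le_trans ?_ (truncNegLogPow.reverse_poincare μ n hp hpα)⟩
  · rw [truncNegLogPow.lintegral_abs_mul_norm_rpow_rpow μ _ hp₀ hpα]
    exact ENNReal.rpow_ne_top_of_nonneg (by positivity) ENNReal.ofReal_ne_top
  · rw [truncNegLogPow.lintegral_norm_fderiv_mul_norm_rpow_rpow μ _ hp₀ hpα]
    exact ENNReal.rpow_ne_top_of_nonneg (by positivity) ENNReal.ofReal_ne_top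
  · gcongr

/-- Theorem 2.a (sharpness, bounded case): for `d ≥ 2` and `α > −1` with
`p₀ = d/(1+α) > 1`, there exist a constant `C > 0` and a function `f`, not a.e. zero,
supported in the closed unit ball `B`, continuously differentiable on `B \ {0}`,
such that for every `p ∈ (1, p₀)`,
`( ∫_B (|f(x)|·|x|^{−1−α})^p dx )^{1/p}
   ≥ C·(p/(d − p(1+α)))·( ∫_B (|grad f(x)|·|x|^{−α})^p dx )^{1/p}`,
with both sides finite: the constant `p/|d − p(1+α)|` in the weighted Poincaré
inequality cannot be improved as `p → p₀⁻`. -/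
theorem poincare_sharp_bounded (d : ℕ) (hd : 2 ≤ d) (α : ℝ) (hα : -1 < α)
    (hp₀ : 1 < (d : ℝ) / (1 + α)) :
    ∃ C : ℝ, 0 < C ∧
    ∃ f : EuclideanSpace ℝ (Fin d) → ℝ,
      ¬ (f =ᵐ[volume] 0) ∧
      (∀ x : EuclideanSpace ℝ (Fin d), 1 < ‖x‖ → f x = 0) ∧
      ContDiffOn ℝ 1 f ({x : EuclideanSpace ℝ (Fin d) | ‖x‖ ≤ 1} \ {0}) ∧
      ∀ p : ℝ, 1 < p → p < (d : ℝ) / (1 + α) →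
        (∫⁻ x in {x : EuclideanSpace ℝ (Fin d) | ‖x‖ ≤ 1},
            ENNReal.ofReal ((|f x| * ‖x‖ ^ (-1 - α)) ^ p)) ^ (1 / p) ≠ ⊤ ∧
        (∫⁻ x in {x : EuclideanSpace ℝ (Fin d) | ‖x‖ ≤ 1},
            ENNReal.ofReal ((‖fderiv ℝ f x‖ * ‖x‖ ^ (-α)) ^ p)) ^ (1 / p) ≠ ⊤ ∧
        ENNReal.ofReal (C * (p / ((d : ℝ) - p * (1 + α)))) *
            (∫⁻ x in {x : EuclideanSpace ℝ (Fin d) | ‖x‖ ≤ 1},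
              ENNReal.ofReal ((‖fderiv ℝ f x‖ * ‖x‖ ^ (-α)) ^ p)) ^ (1 / p)
          ≤ (∫⁻ x in {x : EuclideanSpace ℝ (Fin d) | ‖x‖ ≤ 1},
              ENNReal.ofReal ((|f x| * ‖x‖ ^ (-1 - α)) ^ p)) ^ (1 / p) := by
  have : Nonempty (Fin d) := ⟨⟨0, by omega⟩⟩
  obtain ⟨f, hf₀, hsupp, hdiff, hf⟩ := poincare_sharp_bounded_general
    (volume : Measure (EuclideanSpace ℝ (Fin d))) one_half_lt_one
  simp only [finrank_euclideanSpace_fin] at hf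
  exact ⟨1 / 2, one_half_pos, f, hf₀, hsupp, hdiff.of_le le_top, fun p hp hpp₀ ↦
    hf α p hp.le ((lt_div_iff₀ (neg_lt_iff_pos_add'.1 hα)).1 hpp₀)⟩
end

section
/- Let d ≥ 2, α > −1 with p₀ := d/(1+α) > 1, and Δ > 1. Define v(x) = (log|x|)^Δ for x ∈ ℝ^d with |x| > e. Then there exist constants 0 < c₁ ≤ c₂ < ∞ (depending only on d, α, Δ) such that for all p ∈ (p₀, ∞): c₁ · p^{Δ}/(p(1+α) − d)^{Δ + 1/p} ≤ ( ∫_{|x|>e} ( v(x) · |x|^{−1−α} )^p dx )^{1/p} ≤ c₂ · p^{Δ}/(p(1+α) − d)^{Δ + 1/p}. -/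
open MeasureTheory Set ENNReal

/-!
Put `n = dim E` and `s = p (1 + α) - n`. The `p`-th power of the norm is
`∫_{|x| > e} (log |x|)^(Δ p) |x|^(-n-s) dx`, so the logarithm only has to be compared with powers:
* from below, `log |x| ≥ T` outside the ball of radius `e ^ T`, and at `T = (1 + α) p / s ≥ 1` the
  remaining tail `∫_{|x| > e ^ T} |x|^(-n-s) dx` loses only `e ^ (-s T) = e ^ (-(1 + α) p)`, whose
  `p`-th root does not depend on `p`;
* from above, `(log r) ^ a ≤ (a / ε) ^ a r ^ ε` at `ε = s / 2` costs half of the decay exponent `s`.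
-/

section RealPowers

variable {x a b ε t u p q s M Δ : ℝ}

lemma log_rpow_le_mul_rpow (hx : 1 ≤ x) (ha : 0 ≤ a) (hε : 0 < ε) :
    Real.log x ^ a ≤ (a / ε) ^ a * x ^ ε := by
  have hx0 : 0 ≤ x := zero_le_one.trans hx
  rcases ha.eq_or_lt with rfl | ha
  · simpa using Real.one_le_rpow hx hε.le
  calc Real.log x ^ a
      ≤ (x ^ (ε / a) / (ε / a)) ^ a :=
        Real.rpow_le_rpow (Real.log_nonneg hx) (Real.log_le_rpow_div hx0 (by positivity)) ha.le
    _ = (a / ε * x ^ (ε / a)) ^ a := by rw [div_eq_mul_inv, inv_div, mul_comm]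
    _ = (a / ε) ^ a * x ^ ε := by
        rw [Real.mul_rpow (by positivity) (by positivity), ← Real.rpow_mul hx0,
          div_mul_cancel₀ ε ha.ne']

lemma log_rpow_mul_rpow_rpow (hx : 1 ≤ x) :
    (Real.log x ^ a * x ^ b) ^ p = Real.log x ^ (a * p) * x ^ (b * p) := by
  have hx0 : 0 ≤ x := zero_le_one.trans hx
  have hlog : 0 ≤ Real.log x := Real.log_nonneg hx
  rw [Real.mul_rpow (by positivity) (by positivity), ← Real.rpow_mul hlog, ← Real.rpow_mul hx0]

lemma min_one_rpow_le_rpow (hx : 0 < x) (ht : 0 ≤ t) (htu : t ≤ u) : min 1 x ^ u ≤ x ^ t :=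
  calc min 1 x ^ u
      ≤ min 1 x ^ t :=
        Real.rpow_le_rpow_of_exponent_ge (lt_min one_pos hx) (min_le_left _ _) htu
    _ ≤ x ^ t := Real.rpow_le_rpow (le_min zero_le_one hx.le) (min_le_right _ _) ht

lemma rpow_le_max_one_rpow (hx : 0 ≤ x) (ht : 0 ≤ t) (htu : t ≤ u) : x ^ t ≤ max 1 x ^ u :=
  calc x ^ t
      ≤ max 1 x ^ t := Real.rpow_le_rpow hx (le_max_right _ _) ht
    _ ≤ max 1 x ^ u := Real.rpow_le_rpow_of_exponent_le (le_max_left _ _) htu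

lemma rpow_mul_div_rpow_one_div (hq : 0 ≤ q) (hp : 0 < p) (hs : 0 < s) (hM : 0 ≤ M) :
    ((q * p / s) ^ (Δ * p) * (M / s)) ^ (1 / p) =
      q ^ Δ * M ^ (1 / p) * (p ^ Δ / s ^ (Δ + 1 / p)) := by
  have hexp : Δ * p * (1 / p) = Δ := by field_simp
  rw [Real.mul_rpow (by positivity) (by positivity), ← Real.rpow_mul (by positivity), hexp,
    Real.div_rpow (by positivity) hs.le, Real.mul_rpow hq hp.le, Real.div_rpow hM hs.le,
    Real.rpow_add hs]
  field_simp

lemma lintegral_Ioi_rpow_neg_one_sub {R : ℝ} (hR : 0 < R) (hs : 0 < s) :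
    ∫⁻ r in Ioi R, ENNReal.ofReal (r ^ (-1 - s)) = ENNReal.ofReal (R ^ (-s) / s) := by
  have hexp : -1 - s < -1 := by linarith
  rw [← ofReal_integral_eq_lintegral_ofReal (integrableOn_Ioi_rpow_of_lt hexp hR),
    integral_Ioi_rpow_of_lt hexp hR]
  · congr 1
    rw [show -1 - s + 1 = -s by ring, neg_div_neg_eq]
  · filter_upwards [ae_restrict_mem measurableSet_Ioi] with r hr
    exact Real.rpow_nonneg (hR.trans hr).le _

end RealPowers

section RadialIntegrals

variable {E : Type*} [NormedAddCommGroup E] [NormedSpace ℝ E] [FiniteDimensional ℝ E]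
  [Nontrivial E] [MeasurableSpace E] [BorelSpace E] (μ : Measure E) [μ.IsAddHaarMeasure]

lemma lintegral_fun_norm_eq_toSphere_mul {f : ℝ → ℝ≥0∞} (hf : Measurable f) :
    ∫⁻ x, f ‖x‖ ∂μ = μ.toSphere univ *
      ∫⁻ r in Ioi (0 : ℝ), ENNReal.ofReal (r ^ (Module.finrank ℝ E - 1)) * f r := by
  calc ∫⁻ x, f ‖x‖ ∂μ
      = ∫⁻ x : ({0}ᶜ : Set E), f ‖x.1‖ ∂μ.comap (↑) := by
        rw [lintegral_subtype_comap (measurableSet_singleton _).compl fun x ↦ f ‖x‖,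
          restrict_compl_singleton]
    _ = ∫⁻ z, f z.2 ∂μ.toSphere.prod (.volumeIoiPow (Module.finrank ℝ E - 1)) := by
        rw [← μ.measurePreserving_homeomorphUnitSphereProd.lintegral_comp (by fun_prop)]
        simp only [homeomorphUnitSphereProd_apply_snd_coe]
    _ = μ.toSphere univ * ∫⁻ r : Ioi (0 : ℝ), f r ∂.volumeIoiPow (Module.finrank ℝ E - 1) := by
        rw [lintegral_prod _ (by fun_prop)]
        simp only [lintegral_const, mul_comm]
    _ = _ := by
        rw [Measure.volumeIoiPow, lintegral_withDensity_eq_lintegral_mul _ (by fun_prop)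
          (by fun_prop)]
        congr 1
        exact lintegral_subtype_comap measurableSet_Ioi
          fun r ↦ ENNReal.ofReal (r ^ (Module.finrank ℝ E - 1)) * f r

lemma setLIntegral_fun_norm_eq_toSphere_mul {f : ℝ → ℝ≥0∞} (hf : Measurable f) {R : ℝ}
    (hR : 0 ≤ R) :
    ∫⁻ x in {x : E | R < ‖x‖}, f ‖x‖ ∂μ = μ.toSphere univ *
      ∫⁻ r in Ioi R, ENNReal.ofReal (r ^ (Module.finrank ℝ E - 1)) * f r := by
  have hradial := lintegral_fun_norm_eq_toSphere_mul μ (hf.indicator (measurableSet_Ioi (a := R)))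
  simp only [← indicator_mul_right (Ioi R)
    fun r : ℝ ↦ ENNReal.ofReal (r ^ (Module.finrank ℝ E - 1))] at hradial
  rw [lintegral_indicator measurableSet_Ioi, Measure.restrict_restrict measurableSet_Ioi,
    Ioi_inter_Ioi, max_eq_left hR] at hradial
  rw [← hradial, ← lintegral_indicator (measurableSet_lt measurable_const measurable_norm)]
  rfl

lemma setLIntegral_norm_rpow_neg_finrank_sub {R s : ℝ} (hR : 0 < R) (hs : 0 < s) :
    ∫⁻ x in {x : E | R < ‖x‖}, ENNReal.ofReal (‖x‖ ^ (-(Module.finrank ℝ E : ℝ) - s)) ∂μ =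
      ENNReal.ofReal (μ.toSphere.real univ * (R ^ (-s) / s)) := by
  have hdensity : ∀ r ∈ Ioi R,
      ENNReal.ofReal (r ^ (Module.finrank ℝ E - 1)) *
        ENNReal.ofReal (r ^ (-(Module.finrank ℝ E : ℝ) - s)) = ENNReal.ofReal (r ^ (-1 - s)) := by
    intro r hr
    have hr0 : 0 < r := hR.trans hr
    have hdim : 1 ≤ Module.finrank ℝ E := Module.finrank_pos
    rw [← ENNReal.ofReal_mul (by positivity), ← Real.rpow_natCast, ← Real.rpow_add hr0]
    push_cast [Nat.cast_sub hdim]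
    ring_nf
  rw [setLIntegral_fun_norm_eq_toSphere_mul μ
      (f := fun r ↦ ENNReal.ofReal (r ^ (-(Module.finrank ℝ E : ℝ) - s))) (by fun_prop) hR.le,
    setLIntegral_congr_fun measurableSet_Ioi hdensity, lintegral_Ioi_rpow_neg_one_sub hR hs,
    ENNReal.ofReal_mul measureReal_nonneg, ofReal_measureReal]

lemma toSphere_real_univ_pos : 0 < μ.toSphere.real univ :=
  have : NeZero μ.toSphere := ⟨μ.toSphere_ne_zero⟩
  measureReal_univ_pos

end RadialIntegrals

section LogTail

variable {E : Type*} [NormedAddCommGroup E] [NormedSpace ℝ E] [MeasurableSpace E]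

/-- The logarithmic moment `∫_{|x| > e} (log |x|)^a |x|^(-n-s) dμ` with `n = dim E`. The exponent
`s` measures the decay beyond the critical power `|x|^(-n)`. -/
noncomputable def logTail (μ : Measure E) (a s : ℝ) : ℝ≥0∞ :=
  ∫⁻ x in {x : E | Real.exp 1 < ‖x‖},
    ENNReal.ofReal (Real.log ‖x‖ ^ a * ‖x‖ ^ (-(Module.finrank ℝ E : ℝ) - s)) ∂μ

variable [BorelSpace E] (μ : Measure E)

lemma setLIntegral_log_rpow_mul_rpow_eq_logTail (α Δ p : ℝ) :
    ∫⁻ x in {x : E | Real.exp 1 < ‖x‖},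
        ENNReal.ofReal ((Real.log ‖x‖ ^ Δ * ‖x‖ ^ (-1 - α)) ^ p) ∂μ =
      logTail μ (Δ * p) (p * (1 + α) - Module.finrank ℝ E) := by
  refine setLIntegral_congr_fun (measurableSet_lt measurable_const measurable_norm) fun x hx ↦ ?_
  have hx1 : 1 ≤ ‖x‖ := (Real.one_le_exp zero_le_one).trans (le_of_lt hx)
  rw [log_rpow_mul_rpow_rpow hx1]
  ring_nf

variable [FiniteDimensional ℝ E] [Nontrivial E] [μ.IsAddHaarMeasure] {a s T p β Δ : ℝ}

lemma ofReal_le_logTail (ha : 0 ≤ a) (hs : 0 < s) (hT : 1 ≤ T) :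
    ENNReal.ofReal (T ^ a * (μ.toSphere.real univ * Real.exp (-(s * T)) / s)) ≤ logTail μ a s := by
  have hexp : Real.exp T ^ (-s) = Real.exp (-(s * T)) := by
    rw [← Real.exp_mul, mul_neg, mul_comm]
  calc ENNReal.ofReal (T ^ a * (μ.toSphere.real univ * Real.exp (-(s * T)) / s))
      = ∫⁻ x in {x : E | Real.exp T < ‖x‖}, ENNReal.ofReal (T ^ a) *
          ENNReal.ofReal (‖x‖ ^ (-(Module.finrank ℝ E : ℝ) - s)) ∂μ := by
        rw [lintegral_const_mul' _ _ ENNReal.ofReal_ne_top,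
          setLIntegral_norm_rpow_neg_finrank_sub μ (Real.exp_pos T) hs, hexp,
          ← ENNReal.ofReal_mul (by positivity), mul_div_assoc]
    _ ≤ ∫⁻ x in {x : E | Real.exp T < ‖x‖},
          ENNReal.ofReal (Real.log ‖x‖ ^ a * ‖x‖ ^ (-(Module.finrank ℝ E : ℝ) - s)) ∂μ := by
        refine setLIntegral_mono' (measurableSet_lt measurable_const measurable_norm) fun x hx ↦ ?_
        have hlog : T ≤ Real.log ‖x‖ :=
          (Real.le_log_iff_exp_le ((Real.exp_pos T).trans hx)).2 (le_of_lt hx)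
        rw [← ENNReal.ofReal_mul (by positivity)]
        gcongr
    _ ≤ logTail μ a s := lintegral_mono_set fun x hx ↦ (Real.exp_le_exp.2 hT).trans_lt hx

lemma logTail_le_ofReal (ha : 0 ≤ a) (hs : 0 < s) :
    logTail μ a s ≤ ENNReal.ofReal ((2 * a / s) ^ a * (2 * μ.toSphere.real univ / s)) := by
  have hs2 : 0 < s / 2 := half_pos hs
  have htail : Real.exp 1 ^ (-(s / 2)) ≤ 1 :=
    Real.rpow_le_one_of_one_le_of_nonpos (Real.one_le_exp zero_le_one) (by linarith)
  calc logTail μ a s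
      ≤ ∫⁻ x in {x : E | Real.exp 1 < ‖x‖}, ENNReal.ofReal ((2 * a / s) ^ a) *
          ENNReal.ofReal (‖x‖ ^ (-(Module.finrank ℝ E : ℝ) - s / 2)) ∂μ := by
        refine setLIntegral_mono' (measurableSet_lt measurable_const measurable_norm) fun x hx ↦ ?_
        have hx1 : 1 ≤ ‖x‖ := (Real.one_le_exp zero_le_one).trans (le_of_lt hx)
        have hx0 : 0 < ‖x‖ := one_pos.trans_le hx1
        rw [← ENNReal.ofReal_mul (by positivity)]
        refine ENNReal.ofReal_le_ofReal ?_
        calc Real.log ‖x‖ ^ a * ‖x‖ ^ (-(Module.finrank ℝ E : ℝ) - s)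
            ≤ (a / (s / 2)) ^ a * ‖x‖ ^ (s / 2) * ‖x‖ ^ (-(Module.finrank ℝ E : ℝ) - s) := by
              gcongr
              exact log_rpow_le_mul_rpow hx1 ha hs2
          _ = (2 * a / s) ^ a * ‖x‖ ^ (-(Module.finrank ℝ E : ℝ) - s / 2) := by
              rw [mul_assoc, ← Real.rpow_add hx0]
              ring_nf
    _ = ENNReal.ofReal ((2 * a / s) ^ a *
          (μ.toSphere.real univ * (Real.exp 1 ^ (-(s / 2)) / (s / 2)))) := by
        rw [lintegral_const_mul' _ _ ENNReal.ofReal_ne_top,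
          setLIntegral_norm_rpow_neg_finrank_sub μ (Real.exp_pos 1) hs2,
          ← ENNReal.ofReal_mul (by positivity)]
    _ ≤ ENNReal.ofReal ((2 * a / s) ^ a * (μ.toSphere.real univ * (1 / (s / 2)))) := by
        gcongr
    _ = ENNReal.ofReal ((2 * a / s) ^ a * (2 * μ.toSphere.real univ / s)) := by
        ring_nf

lemma ofReal_le_logTail_rpow_one_div (hΔ : 0 ≤ Δ) (hp : 0 < p) (hs : 0 < s) (hsβ : s ≤ β * p) :
    ENNReal.ofReal (β ^ Δ * (μ.toSphere.real univ ^ (1 / p) * Real.exp (-β)) *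
        (p ^ Δ / s ^ (Δ + 1 / p))) ≤ logTail μ (Δ * p) s ^ (1 / p) := by
  have hβ : 0 ≤ β := (pos_of_mul_pos_left (hs.trans_le hsβ) hp.le).le
  have hsT : s * (β * p / s) = β * p := mul_div_cancel₀ _ hs.ne'
  have hroot : (μ.toSphere.real univ * Real.exp (-(β * p))) ^ (1 / p) =
      μ.toSphere.real univ ^ (1 / p) * Real.exp (-β) := by
    rw [Real.mul_rpow (by positivity) (by positivity), ← Real.exp_mul]
    congr 2
    field_simp
  have hlower := ofReal_le_logTail μ (mul_nonneg hΔ hp.le) hs ((one_le_div hs).2 hsβ)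
  rw [hsT] at hlower
  rw [← hroot, ← rpow_mul_div_rpow_one_div hβ hp hs (by positivity),
    ← ENNReal.ofReal_rpow_of_nonneg (by positivity) (by positivity)]
  gcongr

lemma logTail_rpow_one_div_le_ofReal (hΔ : 0 ≤ Δ) (hp : 0 < p) (hs : 0 < s) :
    logTail μ (Δ * p) s ^ (1 / p) ≤
      ENNReal.ofReal ((2 * Δ) ^ Δ * (2 * μ.toSphere.real univ) ^ (1 / p) *
        (p ^ Δ / s ^ (Δ + 1 / p))) := by
  have hupper := logTail_le_ofReal μ (mul_nonneg hΔ hp.le) hs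
  rw [← mul_assoc] at hupper
  rw [← rpow_mul_div_rpow_one_div (by positivity) hp hs (by positivity),
    ← ENNReal.ofReal_rpow_of_nonneg (by positivity) (by positivity)]
  gcongr

theorem v_weight_estimate_general {α : ℝ} (hα : -1 < α) (hΔ : 0 ≤ Δ) :
    ∃ c₁ c₂ : ℝ, 0 < c₁ ∧ c₁ ≤ c₂ ∧
      ∀ p : ℝ, (Module.finrank ℝ E : ℝ) / (1 + α) < p →
        ENNReal.ofReal (c₁ * (p ^ Δ / (p * (1 + α) - Module.finrank ℝ E) ^ (Δ + 1 / p)))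
          ≤ (∫⁻ x in {x : E | Real.exp 1 < ‖x‖},
              ENNReal.ofReal ((Real.log ‖x‖ ^ Δ * ‖x‖ ^ (-1 - α)) ^ p) ∂μ) ^ (1 / p) ∧
        (∫⁻ x in {x : E | Real.exp 1 < ‖x‖},
              ENNReal.ofReal ((Real.log ‖x‖ ^ Δ * ‖x‖ ^ (-1 - α)) ^ p) ∂μ) ^ (1 / p)
          ≤ ENNReal.ofReal
              (c₂ * (p ^ Δ / (p * (1 + α) - Module.finrank ℝ E) ^ (Δ + 1 / p))) := by
  set n : ℝ := (Module.finrank ℝ E : ℝ)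
  set ω := μ.toSphere.real univ
  have hβ : 0 < 1 + α := by linarith
  have hn0 : 0 < n := Nat.cast_pos.2 Module.finrank_pos
  have hω : 0 < ω := toSphere_real_univ_pos μ
  set p₀ := n / (1 + α)
  have hp₀ : 0 < p₀ := by positivity
  set c₁ := (1 + α) ^ Δ * (min 1 ω ^ (1 / p₀) * Real.exp (-(1 + α)))
  set c₂ := (2 * Δ) ^ Δ * max 1 (2 * ω) ^ (1 / p₀)
  refine ⟨c₁, max c₁ c₂, by positivity, le_max_left _ _, fun p hp ↦ ?_⟩
  have hp0 : 0 < p := hp₀.trans hp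
  have hroot : 1 / p ≤ 1 / p₀ := one_div_le_one_div_of_le hp₀ hp.le
  have hs : 0 < p * (1 + α) - n := sub_pos.2 ((div_lt_iff₀ hβ).1 hp)
  have hsβ : p * (1 + α) - n ≤ (1 + α) * p := by linarith
  have hc₁ : c₁ ≤ (1 + α) ^ Δ * (ω ^ (1 / p) * Real.exp (-(1 + α))) := by
    simp only [c₁]
    gcongr
    exact min_one_rpow_le_rpow hω (by positivity) hroot
  have hc₂ : (2 * Δ) ^ Δ * (2 * ω) ^ (1 / p) ≤ c₂ := by
    simp only [c₂]
    gcongr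
    exact rpow_le_max_one_rpow (by positivity) (by positivity) hroot
  rw [setLIntegral_log_rpow_mul_rpow_eq_logTail]
  constructor
  · refine le_trans ?_ (ofReal_le_logTail_rpow_one_div μ hΔ hp0 hs hsβ)
    gcongr
  · refine (logTail_rpow_one_div_le_ofReal μ hΔ hp0 hs).trans ?_
    gcongr
    exact le_max_of_le_right hc₂

end LogTail

/-- For `d ≥ 2`, `α > −1` with `p₀ = d/(1+α) > 1` and `Δ > 1`, the function
`v(x) = (log|x|)^Δ` on `|x| > e` satisfies: for all `p ∈ (p₀, ∞)` the weighted norm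
`( ∫_{|x|>e} (v(x)·|x|^{−1−α})^p dx )^{1/p}` is comparable (with constants
depending only on `d, α, Δ`) to `p^Δ/(p(1+α) − d)^{Δ + 1/p}`. -/
theorem v_weight_estimate (d : ℕ) (hd : 2 ≤ d) (α Δ : ℝ) (hα : -1 < α)
    (hp₀ : 1 < (d : ℝ) / (1 + α)) (hΔ : 1 < Δ) :
    ∃ c₁ c₂ : ℝ, 0 < c₁ ∧ c₁ ≤ c₂ ∧
      ∀ p : ℝ, (d : ℝ) / (1 + α) < p →
        ENNReal.ofReal (c₁ * (p ^ Δ / (p * (1 + α) - (d : ℝ)) ^ (Δ + 1 / p)))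
          ≤ (∫⁻ x in {x : EuclideanSpace ℝ (Fin d) | Real.exp 1 < ‖x‖},
              ENNReal.ofReal (((Real.log ‖x‖) ^ Δ * ‖x‖ ^ (-1 - α)) ^ p)) ^ (1 / p) ∧
        (∫⁻ x in {x : EuclideanSpace ℝ (Fin d) | Real.exp 1 < ‖x‖},
              ENNReal.ofReal (((Real.log ‖x‖) ^ Δ * ‖x‖ ^ (-1 - α)) ^ p)) ^ (1 / p)
          ≤ ENNReal.ofReal (c₂ * (p ^ Δ / (p * (1 + α) - (d : ℝ)) ^ (Δ + 1 / p))) := by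
  have : Nonempty (Fin d) := ⟨⟨0, by omega⟩⟩
  simpa only [finrank_euclideanSpace_fin] using
    v_weight_estimate_general (volume : Measure (EuclideanSpace ℝ (Fin d))) hα
      (zero_le_one.trans hΔ.le)
end

section
/- Let d ≥ 2 and α > −1 with p₀ := d/(1+α) > 1. Then there exist a constant C > 0 and a function f : ℝ^d → ℝ, not almost everywhere zero, defined on the exterior domain D = {x : |x| ≥ 1}, vanishing for 1 ≤ |x| ≤ e/2, continuously differentiable on the interior of D, such that for every p ∈ (p₀, ∞): ( ∫_D ( |f(x)| · |x|^{−1−α} )^p dx )^{1/p} ≥ C · ( p/(p(1+α) − d) ) · ( ∫_D ( |grad f(x)| · |x|^{−α} )^p dx )^{1/p}, with both sides finite. Consequently the constant p/|d − p(1+α)| in the weighted Poincaré inequality on an unbounded domain cannot be improved either as p → p₀ from above or as p → ∞. -/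
open MeasureTheory Set ENNReal

/-!
The extremal family is the power `f(x) = (log⁺ (‖x‖ / R)) ^ s` with `s > 1`, for which
`‖grad f(x)‖ = s (log⁺ (‖x‖ / R)) ^ (s - 1) / ‖x‖`. In polar coordinates `‖x‖ = R eᵗ`, the `p`-th
powers of both weighted norms become, up to one common factor, Gamma integrals with rate
`ε = p (1 + α) - d`: the function gives `Γ(s p + 1) / ε ^ (s p + 1)` and the gradient gives
`s ^ p Γ((s - 1) p + 1) / ε ^ ((s - 1) p + 1)`. Log-convexity of `Γ` yields
`q ^ p Γ(q + 1) ≤ Γ(q + p + 1)`, which for `q = (s - 1) p` bounds the quotient of the norms below by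
`(s - 1) / s * (p / ε)`. The factor `(s - 1) / s` can be any number in `(0, 1)`.
-/

section

open Module Metric
open scoped Real

theorem rpow_mul_Gamma_add_one_le {q p : ℝ} (hq : 0 < q) (hp : 0 < p) :
    q ^ p * Real.Gamma (q + 1) ≤ Real.Gamma (q + p + 1) := by
  have hΓq : 0 < Real.Gamma q := Real.Gamma_pos_of_pos hq
  have hΓq1 : 0 < Real.Gamma (q + 1) := Real.Gamma_pos_of_pos (by linarith)
  have hΓqp : 0 < Real.Gamma (q + p + 1) := Real.Gamma_pos_of_pos (by linarith)
  have log_Gamma_add_one :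
      Real.log (Real.Gamma (q + 1)) - Real.log (Real.Gamma q) = Real.log q := by
    rw [Real.Gamma_add_one hq.ne', Real.log_mul hq.ne' hΓq.ne', add_sub_cancel_right]
  have log_le_slope : Real.log q ≤
      (Real.log (Real.Gamma (q + p + 1)) - Real.log (Real.Gamma (q + 1))) / p := by
    have slope_le := Real.convexOn_log_Gamma.slope_mono_adjacent (x := q) (y := q + 1)
      (z := q + p + 1) hq (show 0 < q + p + 1 by linarith) (by linarith) (by linarith)
    rwa [Function.comp_apply, Function.comp_apply, Function.comp_apply, log_Gamma_add_one,
      add_sub_cancel_left, div_one, show q + p + 1 - (q + 1) = p by ring] at slope_le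
  rw [← Real.log_le_log_iff (by positivity) hΓqp, Real.log_mul (by positivity) hΓq1.ne',
    Real.log_rpow hq]
  linarith [(le_div_iff₀' hp).1 log_le_slope]

theorem div_rpow_mul_Gamma_div_rpow_le {q p ε : ℝ} (hq : 0 < q) (hp : 0 < p) (hε : 0 < ε) :
    (q / ε) ^ p * (Real.Gamma (q + 1) / ε ^ (q + 1)) ≤
      Real.Gamma (q + p + 1) / ε ^ (q + p + 1) := by
  calc (q / ε) ^ p * (Real.Gamma (q + 1) / ε ^ (q + 1))
      = q ^ p * Real.Gamma (q + 1) / ε ^ (q + p + 1) := by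
        rw [Real.div_rpow hq.le hε.le, div_mul_div_comm, ← Real.rpow_add hε]
        congr 2
        ring
    _ ≤ Real.Gamma (q + p + 1) / ε ^ (q + p + 1) := by
        gcongr
        exact rpow_mul_Gamma_add_one_le hq hp

theorem hasDerivAt_max_zero_rpow {s : ℝ} (hs : 1 < s) (u : ℝ) :
    HasDerivAt (fun t : ℝ ↦ max 0 t ^ s) (s * max 0 u ^ (s - 1)) u := by
  have hs0 : 0 < s := by linarith
  have hs1 : 0 < s - 1 := by linarith
  refine hasDerivAt_of_hasDerivAt_of_ne' (x := 0) (g := fun u ↦ s * max 0 u ^ (s - 1))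
    (fun t ht ↦ ?_) ?_ ?_ u
  · rcases lt_or_gt_of_ne ht with ht | ht
    · rw [max_eq_left ht.le, Real.zero_rpow hs1.ne', mul_zero]
      refine (hasDerivAt_const t (0 : ℝ)).congr_of_eventuallyEq ?_
      filter_upwards [Iio_mem_nhds ht] with v hv
      rw [max_eq_left (le_of_lt hv), Real.zero_rpow hs0.ne']
    · rw [max_eq_right ht.le]
      refine (Real.hasDerivAt_rpow_const (Or.inl ht.ne')).congr_of_eventuallyEq ?_
      filter_upwards [Ioi_mem_nhds ht] with v hv
      rw [max_eq_right (le_of_lt hv)]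
  · exact ((continuous_const.max continuous_id).rpow_const fun _ ↦ Or.inr hs0.le).continuousAt
  · exact (((continuous_const.max continuous_id).rpow_const fun _ ↦ Or.inr hs1.le).const_mul
      s).continuousAt

theorem contDiff_max_zero_rpow {s : ℝ} (hs : 1 < s) :
    ContDiff ℝ 1 (fun t : ℝ ↦ max 0 t ^ s) := by
  have deriv_eq : deriv (fun t : ℝ ↦ max 0 t ^ s) = fun u ↦ s * max 0 u ^ (s - 1) :=
    funext fun u ↦ (hasDerivAt_max_zero_rpow hs u).deriv
  rw [contDiff_one_iff_deriv, deriv_eq]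
  exact ⟨fun u ↦ (hasDerivAt_max_zero_rpow hs u).differentiableAt,
    ((continuous_const.max continuous_id).rpow_const fun _ ↦ Or.inr (by linarith)).const_mul s⟩

theorem posLog_div_eq_zero_of_le {r R : ℝ} (hr : 0 ≤ r) (hrR : r ≤ R) : log⁺ (r / R) = 0 := by
  rw [Real.posLog_eq_zero_iff, abs_of_nonneg (div_nonneg hr (hr.trans hrR))]
  exact div_le_one_of_le₀ hrR (hr.trans hrR)

theorem integral_posLog_rpow_mul_rpow {q ε : ℝ} (hq : 0 < q) (hε : 0 < ε) :
    ∫ y in Ioi (0 : ℝ), log⁺ y ^ q * y ^ (-(ε + 1)) = Real.Gamma (q + 1) / ε ^ (q + 1) := by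
  calc ∫ y in Ioi (0 : ℝ), log⁺ y ^ q * y ^ (-(ε + 1))
      = ∫ y in Ioi (Real.exp 0), log⁺ y ^ q * y ^ (-(ε + 1)) := by
        refine setIntegral_eq_of_subset_of_forall_sdiff_eq_zero measurableSet_Ioi
          (Ioi_subset_Ioi (Real.exp_pos 0).le) fun y hy ↦ ?_
        have posLog_y : log⁺ y = 0 := by
          simpa using posLog_div_eq_zero_of_le (R := 1) (le_of_lt hy.1) (by simpa using hy.2)
        rw [posLog_y, Real.zero_rpow hq.ne', zero_mul]
    _ = ∫ t in Ioi (0 : ℝ), t ^ (q + 1 - 1) * Real.exp (-(ε * t)) := by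
        rw [← integral_comp_exp_Ioi]
        refine setIntegral_congr_fun measurableSet_Ioi fun t ht ↦ ?_
        rw [Real.posLog_apply, Real.log_exp, max_eq_right (le_of_lt ht), smul_eq_mul,
          mul_left_comm, ← Real.exp_mul, ← Real.exp_add, add_sub_cancel_right]
        congr 2
        ring
    _ = Real.Gamma (q + 1) / ε ^ (q + 1) := by
        rw [Real.integral_rpow_mul_exp_neg_mul_Ioi (by linarith) hε,
          Real.div_rpow zero_le_one hε.le, Real.one_rpow, one_div_mul_eq_div]

theorem integral_posLog_div_rpow_mul_rpow {q ε R : ℝ} (hq : 0 < q) (hε : 0 < ε) (hR : 0 < R) :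
    ∫ y in Ioi (0 : ℝ), log⁺ (y / R) ^ q * y ^ (-(ε + 1)) =
      R ^ (-ε) * (Real.Gamma (q + 1) / ε ^ (q + 1)) := by
  calc ∫ y in Ioi (0 : ℝ), log⁺ (y / R) ^ q * y ^ (-(ε + 1))
      = R * ∫ z in Ioi (0 : ℝ), log⁺ (R * z / R) ^ q * (R * z) ^ (-(ε + 1)) := by
        rw [← smul_eq_mul, integral_comp_mul_left_Ioi' (fun y ↦ log⁺ (y / R) ^ q * y ^ (-(ε + 1)))
          0 hR, mul_zero]
    _ = R * ∫ z in Ioi (0 : ℝ), R ^ (-(ε + 1)) * (log⁺ z ^ q * z ^ (-(ε + 1))) := by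
        congr 1
        refine setIntegral_congr_fun measurableSet_Ioi fun z hz ↦ ?_
        rw [mul_div_cancel_left₀ z hR.ne', Real.mul_rpow hR.le (le_of_lt hz), mul_left_comm]
    _ = R ^ (-ε) * (Real.Gamma (q + 1) / ε ^ (q + 1)) := by
        rw [integral_const_mul, integral_posLog_rpow_mul_rpow hq hε, ← mul_assoc,
          ← Real.rpow_one_add' hR.le (by linarith)]
        congr 2
        ring

section Radial

variable {E : Type*} [SeminormedAddCommGroup E] {R s : ℝ}

/-- The radial function `(log⁺ (‖x‖ / R)) ^ s`, the near-extremiser. It plays the role of the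
paper's `v_Δ` with `Δ = s`, the smooth transition being replaced by the cutoff built into
`log⁺`. -/
noncomputable def logProfile {E : Type*} [Norm E] (R s : ℝ) (x : E) : ℝ :=
  log⁺ (‖x‖ / R) ^ s

theorem logProfile_eq_zero_of_norm_le (hs : s ≠ 0) {x : E} (hx : ‖x‖ ≤ R) :
    logProfile R s x = 0 := by
  rw [logProfile, posLog_div_eq_zero_of_le (norm_nonneg x) hx, Real.zero_rpow hs]

theorem logProfile_pos_of_lt_norm (hR : 0 < R) {x : E} (hx : R < ‖x‖) : 0 < logProfile R s x := by
  have one_lt : 1 < ‖x‖ / R := (one_lt_div hR).2 hx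
  refine Real.rpow_pos_of_pos ?_ s
  rw [Real.posLog_eq_log (one_lt.le.trans (le_abs_self _))]
  exact Real.log_pos one_lt

/-- The `q`-th moment of `log⁺ (‖x‖ / R)` with respect to `‖x‖ ^ (-b) dμ`. For `f = logProfile R s`,
the `p`-th powers of both sides of the weighted Poincaré inequality are multiples of such
moments. -/
noncomputable def logMoment {E : Type*} [Norm E] [MeasurableSpace E] (μ : Measure E)
    (R b q : ℝ) : ℝ≥0∞ :=
  ∫⁻ x, ENNReal.ofReal (log⁺ (‖x‖ / R) ^ q * ‖x‖ ^ (-b)) ∂μ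

variable [MeasurableSpace E] (μ : Measure E)

theorem setLIntegral_one_le_norm_eq_logMoment {b q : ℝ} (hR : 1 ≤ R) (hq : q ≠ 0) :
    ∫⁻ x in {x : E | 1 ≤ ‖x‖}, ENNReal.ofReal (log⁺ (‖x‖ / R) ^ q * ‖x‖ ^ (-b)) ∂μ =
      logMoment μ R b q := by
  refine setLIntegral_eq_of_support_subset fun x hx ↦ ?_
  by_contra norm_lt
  have norm_le : ‖x‖ ≤ R := (not_le.1 norm_lt).le.trans hR
  apply hx
  dsimp only
  rw [posLog_div_eq_zero_of_le (norm_nonneg x) norm_le, Real.zero_rpow hq, zero_mul,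
    ENNReal.ofReal_zero]

theorem lintegral_logProfile_eq_logMoment {α p : ℝ} (hR : 1 ≤ R) (hs : 0 < s) (hp : 0 < p) :
    ∫⁻ x in {x : E | 1 ≤ ‖x‖}, ENNReal.ofReal ((|logProfile R s x| * ‖x‖ ^ (-1 - α)) ^ p) ∂μ =
      logMoment μ R (p * (1 + α)) (s * p) := by
  rw [← setLIntegral_one_le_norm_eq_logMoment μ hR (mul_pos hs hp).ne']
  congr! 3 with x
  have profile_nonneg : 0 ≤ log⁺ (‖x‖ / R) ^ s := Real.rpow_nonneg Real.posLog_nonneg s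
  rw [logProfile, abs_of_nonneg profile_nonneg, Real.mul_rpow profile_nonneg (by positivity),
    ← Real.rpow_mul Real.posLog_nonneg, ← Real.rpow_mul (norm_nonneg x)]
  congr 2
  ring

end Radial

theorem not_ae_logProfile_eq_zero {E : Type*} [NormedAddCommGroup E] [NormedSpace ℝ E]
    [Nontrivial E] [MeasurableSpace E] (μ : Measure E) [μ.IsOpenPosMeasure] {R s : ℝ} (hR : 1 ≤ R) :
    ¬ ∀ᵐ x ∂μ.restrict {x : E | 1 ≤ ‖x‖}, logProfile R s x = 0 := by
  intro ae_zero
  have isOpen_exterior : IsOpen {x : E | R < ‖x‖} := isOpen_lt continuous_const continuous_norm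
  have exterior_nonempty : {x : E | R < ‖x‖}.Nonempty := NormedSpace.exists_lt_norm ℝ E R
  have exterior_subset : {x : E | R < ‖x‖} ⊆ {x | 1 ≤ ‖x‖} := fun x hx ↦ hR.trans (le_of_lt hx)
  refine (isOpen_exterior.measure_pos μ exterior_nonempty).ne' ?_
  rw [← Measure.restrict_eq_self μ exterior_subset]
  exact measure_mono_null
    (fun x hx ↦ (logProfile_pos_of_lt_norm (zero_lt_one.trans_le hR) hx).ne') (ae_iff.1 ae_zero)

section Moments

variable {E : Type*} [NormedAddCommGroup E] [NormedSpace ℝ E] [FiniteDimensional ℝ E]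
  [Nontrivial E] [MeasurableSpace E] [BorelSpace E] (μ : Measure E) [μ.IsAddHaarMeasure]

theorem integral_posLog_norm_div_rpow_mul_norm_rpow {R b q : ℝ} (hR : 0 < R)
    (hb : finrank ℝ E < b) (hq : 0 < q) :
    ∫ x, log⁺ (‖x‖ / R) ^ q * ‖x‖ ^ (-b) ∂μ =
      finrank ℝ E * μ.real (ball 0 1) * R ^ (-(b - finrank ℝ E)) *
        (Real.Gamma (q + 1) / (b - finrank ℝ E) ^ (q + 1)) := by
  have radial_density : ∀ y ∈ Ioi (0 : ℝ),
      y ^ (finrank ℝ E - 1) • (log⁺ (y / R) ^ q * y ^ (-b)) =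
        log⁺ (y / R) ^ q * y ^ (-(b - finrank ℝ E + 1)) := by
    intro y hy
    rw [smul_eq_mul, mul_left_comm, ← Real.rpow_natCast, ← Real.rpow_add hy,
      Nat.cast_pred finrank_pos]
    congr 2
    ring
  rw [integral_fun_norm_addHaar μ (fun y ↦ log⁺ (y / R) ^ q * y ^ (-b)),
    setIntegral_congr_fun measurableSet_Ioi radial_density,
    integral_posLog_div_rpow_mul_rpow hq (sub_pos.2 hb) hR, nsmul_eq_mul, smul_eq_mul]
  ring

theorem logMoment_eq {R b q : ℝ} (hR : 0 < R) (hb : finrank ℝ E < b) (hq : 0 < q) :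
    logMoment μ R b q =
      ENNReal.ofReal (finrank ℝ E * μ.real (ball 0 1) * R ^ (-(b - finrank ℝ E)) *
        (Real.Gamma (q + 1) / (b - finrank ℝ E) ^ (q + 1))) := by
  have integral_eq := integral_posLog_norm_div_rpow_mul_norm_rpow μ hR hb hq
  have integral_pos : 0 < ∫ x, log⁺ (‖x‖ / R) ^ q * ‖x‖ ^ (-b) ∂μ := by
    have ball_pos : 0 < μ.real (ball (0 : E) 1) :=
      ENNReal.toReal_pos (measure_ball_pos μ 0 one_pos).ne' measure_ball_lt_top.ne
    rw [integral_eq]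
    exact mul_pos
      (mul_pos (mul_pos (Nat.cast_pos.2 finrank_pos) ball_pos) (Real.rpow_pos_of_pos hR _))
      (div_pos (Real.Gamma_pos_of_pos (by linarith)) (Real.rpow_pos_of_pos (sub_pos.2 hb) _))
  rw [logMoment, ← ofReal_integral_eq_lintegral_ofReal (.of_integral_ne_zero integral_pos.ne')
    (.of_forall fun x ↦ mul_nonneg (Real.rpow_nonneg Real.posLog_nonneg q) (by positivity)),
    integral_eq]

theorem ofReal_rpow_mul_logMoment_le {R b q p : ℝ} (hR : 0 < R) (hb : finrank ℝ E < b)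
    (hq : 0 < q) (hp : 0 < p) :
    ENNReal.ofReal (q / (b - finrank ℝ E)) ^ p * logMoment μ R b q ≤ logMoment μ R b (q + p) := by
  have rate_pos : 0 < b - finrank ℝ E := sub_pos.2 hb
  rw [logMoment_eq μ hR hb hq, logMoment_eq μ hR hb (add_pos hq hp),
    ENNReal.ofReal_rpow_of_nonneg (by positivity) hp.le, ← ENNReal.ofReal_mul (by positivity),
    mul_left_comm]
  gcongr
  exact div_rpow_mul_Gamma_div_rpow_le hq hp rate_pos

end Moments

section Profile

variable {E : Type*} [NormedAddCommGroup E] [InnerProductSpace ℝ E] {R s : ℝ}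

theorem contDiffAt_logProfile (hR : R ≠ 0) (hs : 1 < s) {x : E} (hx : x ≠ 0) :
    ContDiffAt ℝ 1 (logProfile R s) x := by
  have contDiffAt_log : ContDiffAt ℝ 1 (fun y : E ↦ Real.log (‖y‖ / R)) x :=
    ((contDiffAt_norm ℝ hx).div_const R).log (div_ne_zero (norm_ne_zero_iff.2 hx) hR)
  exact (contDiff_max_zero_rpow hs).contDiffAt.comp x contDiffAt_log

theorem norm_fderiv_logProfile [Nontrivial E] (hR : R ≠ 0) (hs : 1 < s) {x : E} (hx : x ≠ 0) :
    ‖fderiv ℝ (logProfile R s) x‖ = s * log⁺ (‖x‖ / R) ^ (s - 1) / ‖x‖ := by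
  have norm_diff : DifferentiableAt ℝ (fun y : E ↦ ‖y‖) x := differentiableAt_id.norm ℝ hx
  have norm_ne : ‖x‖ ≠ 0 := norm_ne_zero_iff.2 hx
  have hasDerivAt_log : HasDerivAt (fun r : ℝ ↦ Real.log (r / R)) ‖x‖⁻¹ ‖x‖ := by
    convert ((hasDerivAt_id' ‖x‖).div_const R).log (div_ne_zero norm_ne hR) using 1
    rw [div_div_div_cancel_right₀ hR, one_div]
  have radial := (hasDerivAt_max_zero_rpow hs (Real.log (‖x‖ / R))).comp ‖x‖ hasDerivAt_log
  have fderiv_eq : fderiv ℝ (logProfile R s) x =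
      (s * log⁺ (‖x‖ / R) ^ (s - 1) * ‖x‖⁻¹) • fderiv ℝ (fun y : E ↦ ‖y‖) x :=
    (radial.comp_hasFDerivAt x norm_diff.hasFDerivAt).fderiv
  have slope_nonneg : 0 ≤ s * log⁺ (‖x‖ / R) ^ (s - 1) * ‖x‖⁻¹ :=
    mul_nonneg (mul_nonneg (by linarith) (Real.rpow_nonneg Real.posLog_nonneg _)) (by positivity)
  rw [fderiv_eq, norm_smul, norm_fderiv_norm norm_diff, mul_one, Real.norm_of_nonneg slope_nonneg,
    ← div_eq_mul_inv]

variable [MeasurableSpace E] [BorelSpace E] (μ : Measure E)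

theorem lintegral_fderiv_logProfile_eq_logMoment [Nontrivial E] {α p : ℝ} (hR : 1 ≤ R)
    (hs : 1 < s) (hp : 0 < p) :
    ∫⁻ x in {x : E | 1 ≤ ‖x‖},
        ENNReal.ofReal ((‖fderiv ℝ (logProfile R s) x‖ * ‖x‖ ^ (-α)) ^ p) ∂μ =
      ENNReal.ofReal s ^ p * logMoment μ R (p * (1 + α)) ((s - 1) * p) := by
  have hs0 : 0 < s := by linarith
  rw [← setLIntegral_one_le_norm_eq_logMoment μ hR (mul_pos (sub_pos.2 hs) hp).ne',
    ENNReal.ofReal_rpow_of_pos hs0, ← lintegral_const_mul' _ _ ENNReal.ofReal_ne_top]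
  refine setLIntegral_congr_fun (measurableSet_le measurable_const measurable_norm) fun x hx ↦ ?_
  have norm_pos : 0 < ‖x‖ := zero_lt_one.trans_le hx
  have posLog_rpow_nonneg : 0 ≤ log⁺ (‖x‖ / R) ^ (s - 1) := Real.rpow_nonneg Real.posLog_nonneg _
  rw [norm_fderiv_logProfile (zero_lt_one.trans_le hR).ne' hs (norm_pos_iff.1 norm_pos),
    ← ENNReal.ofReal_mul (by positivity), div_eq_mul_inv, mul_assoc, ← Real.rpow_neg_one,
    ← Real.rpow_add norm_pos, Real.mul_rpow (by positivity) (by positivity),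
    Real.mul_rpow hs0.le posLog_rpow_nonneg, ← Real.rpow_mul Real.posLog_nonneg,
    ← Real.rpow_mul norm_pos.le, mul_assoc]
  congr 4
  ring

variable [FiniteDimensional ℝ E] [Nontrivial E] [μ.IsAddHaarMeasure]

theorem ofReal_rpow_mul_lintegral_fderiv_logProfile_le {α p : ℝ} (hR : 1 ≤ R) (hs : 1 < s)
    (hp : 0 < p) (hb : finrank ℝ E < p * (1 + α)) :
    ENNReal.ofReal ((s - 1) / s * (p / (p * (1 + α) - finrank ℝ E))) ^ p *
        ∫⁻ x in {x : E | 1 ≤ ‖x‖},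
          ENNReal.ofReal ((‖fderiv ℝ (logProfile R s) x‖ * ‖x‖ ^ (-α)) ^ p) ∂μ ≤
      ∫⁻ x in {x : E | 1 ≤ ‖x‖},
        ENNReal.ofReal ((|logProfile R s x| * ‖x‖ ^ (-1 - α)) ^ p) ∂μ := by
  have hs0 : 0 < s := by linarith
  have hs1 : 0 < s - 1 := by linarith
  have rate_pos : 0 < p * (1 + α) - finrank ℝ E := sub_pos.2 hb
  have constant_eq : (s - 1) / s * (p / (p * (1 + α) - finrank ℝ E)) * s =
      (s - 1) * p / (p * (1 + α) - finrank ℝ E) := by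
    field_simp
  have exponent_eq : s * p = (s - 1) * p + p := by ring
  rw [lintegral_logProfile_eq_logMoment μ hR hs0 hp, exponent_eq,
    lintegral_fderiv_logProfile_eq_logMoment μ hR hs hp, ← mul_assoc,
    ← ENNReal.mul_rpow_of_nonneg _ _ hp.le, ← ENNReal.ofReal_mul (by positivity), constant_eq]
  exact ofReal_rpow_mul_logMoment_le μ (zero_lt_one.trans_le hR) hb (mul_pos hs1 hp) hp

end Profile

theorem poincare_sharp_unbounded_general {E : Type*} [NormedAddCommGroup E]
    [InnerProductSpace ℝ E] [FiniteDimensional ℝ E] [Nontrivial E] [MeasurableSpace E]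
    [BorelSpace E] (μ : Measure E) [μ.IsAddHaarMeasure] {C R : ℝ} (hC₀ : 0 < C) (hC₁ : C < 1)
    (hR : 1 ≤ R) :
    ∃ f : E → ℝ,
      ¬ (∀ᵐ x ∂(μ.restrict {x : E | 1 ≤ ‖x‖}), f x = 0) ∧
      (∀ x : E, ‖x‖ ≤ R → f x = 0) ∧
      ContDiffOn ℝ 1 f {x : E | 1 < ‖x‖} ∧
      ∀ α : ℝ, -1 < α → ∀ p : ℝ, (finrank ℝ E : ℝ) / (1 + α) < p →
        (∫⁻ x in {x : E | 1 ≤ ‖x‖}, ENNReal.ofReal ((|f x| * ‖x‖ ^ (-1 - α)) ^ p) ∂μ) ^ (1 / p)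
          ≠ ⊤ ∧
        (∫⁻ x in {x : E | 1 ≤ ‖x‖}, ENNReal.ofReal ((‖fderiv ℝ f x‖ * ‖x‖ ^ (-α)) ^ p) ∂μ) ^ (1 / p)
          ≠ ⊤ ∧
        ENNReal.ofReal (C * (p / (p * (1 + α) - finrank ℝ E))) *
            (∫⁻ x in {x : E | 1 ≤ ‖x‖},
              ENNReal.ofReal ((‖fderiv ℝ f x‖ * ‖x‖ ^ (-α)) ^ p) ∂μ) ^ (1 / p)
          ≤ (∫⁻ x in {x : E | 1 ≤ ‖x‖},
              ENNReal.ofReal ((|f x| * ‖x‖ ^ (-1 - α)) ^ p) ∂μ) ^ (1 / p) := by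
  have hR₀ : 0 < R := zero_lt_one.trans_le hR
  obtain ⟨s, hs, rfl⟩ : ∃ s : ℝ, 1 < s ∧ (s - 1) / s = C :=
    ⟨1 / (1 - C), by rw [lt_div_iff₀] <;> linarith, by field_simp [(sub_pos.2 hC₁).ne']; ring⟩
  refine ⟨logProfile R s, not_ae_logProfile_eq_zero μ hR,
    fun x hx ↦ logProfile_eq_zero_of_norm_le (by linarith) hx,
    fun x hx ↦ (contDiffAt_logProfile hR₀.ne' hs
      (norm_pos_iff.1 (zero_lt_one.trans hx))).contDiffWithinAt, fun α hα p hp ↦ ?_⟩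
  have hα' : 0 < 1 + α := by linarith
  have hp₀ : 0 < p := lt_of_le_of_lt (by positivity) hp
  have hb : finrank ℝ E < p * (1 + α) := (div_lt_iff₀ hα').1 hp
  refine ⟨?_, ?_, ?_⟩
  · rw [lintegral_logProfile_eq_logMoment μ hR (by linarith) hp₀,
      logMoment_eq μ hR₀ hb (mul_pos (by linarith) hp₀)]
    finiteness
  · rw [lintegral_fderiv_logProfile_eq_logMoment μ hR hs hp₀,
      logMoment_eq μ hR₀ hb (mul_pos (by linarith) hp₀)]
    finiteness
  · rw [one_div, ENNReal.le_rpow_inv_iff hp₀, ENNReal.mul_rpow_of_nonneg _ _ hp₀.le,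
      ENNReal.rpow_inv_rpow hp₀.ne']
    exact ofReal_rpow_mul_lintegral_fderiv_logProfile_le μ hR hs hp₀ hb

end

/-- Theorem 2.b (sharpness, unbounded case): for `d ≥ 2` and `α > −1` with
`p₀ = d/(1+α) > 1`, there exist a constant `C > 0` and a function `f` on the exterior
domain `D = {|x| ≥ 1}`, not a.e. zero on `D`, vanishing for `1 ≤ |x| ≤ e/2`,
continuously differentiable on the interior of `D`, such that for every `p ∈ (p₀, ∞)`,
`( ∫_D (|f(x)|·|x|^{−1−α})^p dx )^{1/p}
   ≥ C·(p/(p(1+α) − d))·( ∫_D (|grad f(x)|·|x|^{−α})^p dx )^{1/p}`,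
with both sides finite: the constant `p/|d − p(1+α)|` in the weighted Poincaré
inequality on an unbounded domain cannot be improved as `p → p₀⁺` or as `p → ∞`. -/
theorem poincare_sharp_unbounded (d : ℕ) (hd : 2 ≤ d) (α : ℝ) (hα : -1 < α)
    (hp₀ : 1 < (d : ℝ) / (1 + α)) :
    ∃ C : ℝ, 0 < C ∧
    ∃ f : EuclideanSpace ℝ (Fin d) → ℝ,
      ¬ (∀ᵐ x ∂(volume.restrict {x : EuclideanSpace ℝ (Fin d) | 1 ≤ ‖x‖}), f x = 0) ∧
      (∀ x : EuclideanSpace ℝ (Fin d), 1 ≤ ‖x‖ → ‖x‖ ≤ Real.exp 1 / 2 → f x = 0) ∧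
      ContDiffOn ℝ 1 f {x : EuclideanSpace ℝ (Fin d) | 1 < ‖x‖} ∧
      ∀ p : ℝ, (d : ℝ) / (1 + α) < p →
        (∫⁻ x in {x : EuclideanSpace ℝ (Fin d) | 1 ≤ ‖x‖},
            ENNReal.ofReal ((|f x| * ‖x‖ ^ (-1 - α)) ^ p)) ^ (1 / p) ≠ ⊤ ∧
        (∫⁻ x in {x : EuclideanSpace ℝ (Fin d) | 1 ≤ ‖x‖},
            ENNReal.ofReal ((‖fderiv ℝ f x‖ * ‖x‖ ^ (-α)) ^ p)) ^ (1 / p) ≠ ⊤ ∧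
        ENNReal.ofReal (C * (p / (p * (1 + α) - (d : ℝ)))) *
            (∫⁻ x in {x : EuclideanSpace ℝ (Fin d) | 1 ≤ ‖x‖},
              ENNReal.ofReal ((‖fderiv ℝ f x‖ * ‖x‖ ^ (-α)) ^ p)) ^ (1 / p)
          ≤ (∫⁻ x in {x : EuclideanSpace ℝ (Fin d) | 1 ≤ ‖x‖},
              ENNReal.ofReal ((|f x| * ‖x‖ ^ (-1 - α)) ^ p)) ^ (1 / p) := by
  have : NeZero d := ⟨by omega⟩
  obtain ⟨f, hf₀, hfR, hfdiff, hfp⟩ := poincare_sharp_unbounded_general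
    (volume : Measure (EuclideanSpace ℝ (Fin d))) (C := 1 / 2) (R := Real.exp 1 / 2)
    (by norm_num) (by norm_num) (by linarith [Real.add_one_le_exp 1])
  rw [finrank_euclideanSpace_fin] at hfp
  exact ⟨1 / 2, by norm_num, f, hf₀, fun x _ hx ↦ hfR x hx, hfdiff, hfp α hα⟩
end

section
/- Let D ⊆ ℝ^d be measurable, let (a,b) and (a',b') be intervals with 1 ≤ a < b ≤ ∞, 1 ≤ a' < b' ≤ ∞, let ψ be a continuous positive function on (a',b'), and let S ⊆ (a',b') × (a,b) be a set of admissible index pairs. Let g, h : D → ℝ be measurable and K : S → (0,∞) a function such that for every (p,q) ∈ S one has |g|_{q,D} ≤ K(p,q) · |h|_{p,D}, and assume that for every q ∈ (a,b) there is at least one p with (p,q) ∈ S. Define ν(q) = inf{ K(p,q) · ψ(p) : (p,q) ∈ S }. Then sup_{q∈(a,b)} |g|_{q,D}/ν(q) ≤ sup_{p∈(a',b')} |h|_{p,D}/ψ(p). In particular, for the variable-exponent weighted Poincaré inequality |g|_q ≤ C·|q − p(1+α)|^{−1 + 1/(p(1+α)) − 1/q}·|h|_{p(1+α)} (valid for q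 > p(1+α)), one obtains ||g||_{G(ν)} ≤ C·||h||_{G(ψ)} with ν(q) = inf_{p(1+α) < q} |q − p(1+α)|^{−1 + 1/(p(1+α)) − 1/q} · ψ(p(1+α)). -/
open MeasureTheory Set ENNReal

/-! Write `A p = |h|_p` and `B q = |g|_q`. Division in `ℝ≥0∞` turns the infimum defining `ν q` into
a supremum, `B q / ν q = ⨆ p, B q / (K (p, q) * ψ p)`. Each term is at most `A p / ψ p`, because the
factor `K (p, q)` in the hypothesis `B q ≤ K (p, q) * A p` cancels. -/

section

variable {ι κ : Type*}

lemma ennreal_div_biInf (x : ℝ≥0∞) (T : Set ι) (f : ι → ℝ≥0∞) :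
    x / ⨅ i ∈ T, f i = ⨆ i ∈ T, x / f i := by
  simp only [div_eq_mul_inv, ENNReal.inv_iInf, ENNReal.mul_iSup]

lemma ennreal_div_mul_le_div {x y k : ℝ≥0∞} (w : ℝ≥0∞) (hk : k ≠ 0) (hk_top : k ≠ ∞)
    (hxy : x ≤ k * y) : x / (k * w) ≤ y / w :=
  calc x / (k * w) ≤ k * y / (k * w) := by gcongr
    _ = y / w := ENNReal.mul_div_mul_left y w hk hk_top

/-- For `q` without an admissible `p` the infimum is `∞`, and the quotient is then `0`. -/
theorem bgls_variable_exponent_general {S : Set (ι × κ)} {I : Set ι} (J : Set κ)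
    {K : ι × κ → ℝ} {ψ : ι → ℝ} (A : ι → ℝ≥0∞) (B : κ → ℝ≥0∞)
    (hS : ∀ pq ∈ S, pq.1 ∈ I) (hψ : ∀ p ∈ I, 0 < ψ p) (hK : ∀ pq ∈ S, 0 < K pq)
    (hAB : ∀ pq ∈ S, B pq.2 ≤ ENNReal.ofReal (K pq) * A pq.1) :
    (⨆ q ∈ J, B q / ⨅ p ∈ {p | (p, q) ∈ S}, ENNReal.ofReal (K (p, q) * ψ p))
      ≤ ⨆ p ∈ I, A p / ENNReal.ofReal (ψ p) := by
  refine iSup₂_le fun q _ => ?_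
  rw [ennreal_div_biInf]
  refine iSup₂_le fun p (hpq : (p, q) ∈ S) => ?_
  have hp : p ∈ I := hS _ hpq
  calc B q / ENNReal.ofReal (K (p, q) * ψ p)
      = B q / (ENNReal.ofReal (K (p, q)) * ENNReal.ofReal (ψ p)) := by
        rw [ENNReal.ofReal_mul' (hψ p hp).le]
    _ ≤ A p / ENNReal.ofReal (ψ p) :=
        ennreal_div_mul_le_div _ (ENNReal.ofReal_pos.2 (hK _ hpq)).ne' ENNReal.ofReal_ne_top
          (hAB _ hpq)
    _ ≤ ⨆ p ∈ I, A p / ENNReal.ofReal (ψ p) :=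
        le_biSup (fun p => A p / ENNReal.ofReal (ψ p)) hp

end

/-- Variable-exponent estimate in Bilateral Grand Lebesgue Spaces: given intervals
`(a,b)` and `(a',b')` (with possibly infinite right endpoints), a continuous positive
function `ψ` on `(a',b')`, a set `S ⊆ (a',b') × (a,b)` of admissible index pairs, and
`K : S → (0,∞)` with `|g|_q ≤ K(p,q)·|h|_p` for all `(p,q) ∈ S`, such that every
`q ∈ (a,b)` admits some `p` with `(p,q) ∈ S`, one has, with
`ν(q) = inf{K(p,q)·ψ(p) : (p,q) ∈ S}`,
`sup_{q∈(a,b)} |g|_q/ν(q) ≤ sup_{p∈(a',b')} |h|_p/ψ(p)`. -/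
theorem bgls_variable_exponent {d : ℕ}
    (D : Set (EuclideanSpace ℝ (Fin d))) (hD : MeasurableSet D)
    (a a' : ℝ) (b b' : ℝ≥0∞) (ha : 1 ≤ a) (hab : ENNReal.ofReal a < b)
    (ha' : 1 ≤ a') (hab' : ENNReal.ofReal a' < b')
    (ψ : ℝ → ℝ)
    (hψc : ContinuousOn ψ {p : ℝ | a' < p ∧ ENNReal.ofReal p < b'})
    (hψpos : ∀ p : ℝ, a' < p → ENNReal.ofReal p < b' → 0 < ψ p)
    (S : Set (ℝ × ℝ))
    (hS : ∀ pq ∈ S, (a' < pq.1 ∧ ENNReal.ofReal pq.1 < b') ∧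
      (a < pq.2 ∧ ENNReal.ofReal pq.2 < b))
    (g h : EuclideanSpace ℝ (Fin d) → ℝ) (hg : Measurable g) (hh : Measurable h)
    (K : ℝ × ℝ → ℝ) (hK : ∀ pq ∈ S, 0 < K pq)
    (hineq : ∀ pq ∈ S, LpNormOn pq.2 D g ≤ ENNReal.ofReal (K pq) * LpNormOn pq.1 D h)
    (hcover : ∀ q : ℝ, a < q → ENNReal.ofReal q < b → ∃ p : ℝ, (p, q) ∈ S) :
    (⨆ q ∈ {q : ℝ | a < q ∧ ENNReal.ofReal q < b},
        LpNormOn q D g /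
          ⨅ p ∈ {p : ℝ | (p, q) ∈ S}, ENNReal.ofReal (K (p, q) * ψ p))
      ≤ ⨆ p ∈ {p : ℝ | a' < p ∧ ENNReal.ofReal p < b'},
          LpNormOn p D h / ENNReal.ofReal (ψ p) := by
  exact bgls_variable_exponent_general _ (LpNormOn · D h) (LpNormOn · D g)
    (fun pq hpq => (hS pq hpq).1) (fun p hp => hψpos p hp.1 hp.2) hK hineq
end
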